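/- arXiv:2207.09972 — 2 statements merged into one kernel-verified Lean document; each statement's English description precedes it below -/
import Mathlib

section
/- Let k ≥ 3 and n ≥ 2, and let T be a k-gon whose k vertices lie among the vertices of the convex ((k−2)n+2)-gon, such that the k arcs of the polygon between cyclically consecutive vertices of T have lengths (k−2)i_1+1, …, (k−2)i_k+1 for natural numbers i_1, …, i_k (necessarily i_1+⋯+i_k = n−1). Then the set of k-angulations of the polygon containing T as one of their k-gons induces a subgraph of the flip graph K_{k,(k−2)n+2} isomorphic to the Cartesian product K_{k,(k−2)i_1+2} □ K_{k,(k−2)i_2+2} □ ⋯ □ K_{k,(k−2)i_k+2} of the flip graphs of the k sub-polygons cut off by the sides of T (where a flip graph over a 2-gon or k-gon with no k-angulation diagonals is a single vertex). -/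
open Finset

/-- `x` lies strictly between `a` and `b` in cyclic (counterclockwise) order
on the vertices `0, 1, …, m-1` of a convex `m`-gon. -/
def CycBtw {m : ℕ} (a b x : Fin m) : Prop :=
  0 < (x - a).val ∧ (x - a).val < (b - a).val

/-- `a` and `b` are adjacent (cyclically consecutive) vertices of the convex `m`-gon. -/
def PolyAdj {m : ℕ} (a b : Fin m) : Prop :=
  (b - a).val = 1 ∨ (a - b).val = 1

/-- `e` is a side of the convex `m`-gon. -/
def IsSide {m : ℕ} (e : Sym2 (Fin m)) : Prop :=
  ∃ a b : Fin m, e = s(a, b) ∧ PolyAdj a b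

/-- `e` is a diagonal of the convex `m`-gon: a pair of distinct non-adjacent vertices. -/
def IsDiagonal {m : ℕ} (e : Sym2 (Fin m)) : Prop :=
  ¬ e.IsDiag ∧ ∀ a b : Fin m, e = s(a, b) → ¬ PolyAdj a b

/-- Two chords cross iff exactly one endpoint of one lies strictly between the
endpoints of the other (for every representation of the endpoints). -/
def Crosses {m : ℕ} (e f : Sym2 (Fin m)) : Prop :=
  ∀ a b : Fin m, e = s(a, b) →
    ∃ c d : Fin m, f = s(c, d) ∧ Xor' (CycBtw a b c) (CycBtw a b d)

/-- `e` is an edge of the dissection given by the diagonal set `t`: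
a polygon side or a diagonal of `t`. -/
def EdgeOfD {m : ℕ} (t : Finset (Sym2 (Fin m))) (e : Sym2 (Fin m)) : Prop :=
  IsSide e ∨ e ∈ t

/-- `b` is the cyclic successor of `a` among the elements of `F`. -/
def NextIn {m : ℕ} (F : Finset (Fin m)) (a b : Fin m) : Prop :=
  a ∈ F ∧ b ∈ F ∧ a ≠ b ∧ ∀ x ∈ F, ¬ CycBtw a b x

/-- `F` is the vertex set of a cell (face) of the dissection of the convex `m`-gon by the
pairwise non-crossing diagonal set `t`: every pair of cyclically consecutive vertices of
`F` is joined by an edge of the dissection, and no diagonal of `t` joins two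
non-consecutive vertices of `F`. -/
def IsFaceSet {m : ℕ} (t : Finset (Sym2 (Fin m))) (F : Finset (Fin m)) : Prop :=
  3 ≤ F.card ∧
  (∀ a b : Fin m, NextIn F a b → EdgeOfD t s(a, b)) ∧
  (∀ e ∈ t, ∀ a b : Fin m, e = s(a, b) → a ∈ F → b ∈ F → NextIn F a b ∨ NextIn F b a)

/-- `t` is a `k`-angulation of the convex `((k-2)n+2)`-gon: a set of `n - 1` pairwise
non-crossing diagonals subdividing the polygon into cells that are all `k`-gons. -/
def IsKAngulation (k n : ℕ) (t : Finset (Sym2 (Fin ((k - 2) * n + 2)))) : Prop :=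
  (∀ e ∈ t, IsDiagonal e) ∧
  (∀ e ∈ t, ∀ f ∈ t, ¬ Crosses e f) ∧
  t.card = n - 1 ∧
  (∀ F : Finset (Fin ((k - 2) * n + 2)), IsFaceSet t F → F.card = k)

/-- The type of `k`-angulations of the convex `((k-2)n+2)`-gon. -/
def KAngulation (k n : ℕ) : Type :=
  {t : Finset (Sym2 (Fin ((k - 2) * n + 2))) // IsKAngulation k n t}

instance (k n : ℕ) : DecidableEq (KAngulation k n) := fun a b =>
  decidable_of_iff (a.val = b.val) Subtype.ext_iff.symm

noncomputable instance (k n : ℕ) : Fintype (KAngulation k n) := by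
  classical exact Subtype.fintype _

/-- The `k`-angulation flip graph `K_{k,(k-2)n+2}`: vertices are the `k`-angulations of
the convex `((k-2)n+2)`-gon, two of them adjacent iff they differ in exactly one
diagonal (a flip). -/
def kAngGraph (k n : ℕ) : SimpleGraph (KAngulation k n) where
  Adj s t := (s.val \ t.val).card = 1 ∧ (t.val \ s.val).card = 1
  symm := ⟨fun s t h => ⟨h.2, h.1⟩⟩
  loopless := ⟨fun s h => by simp at h⟩

/-- The Cartesian (box) product of a finite family of graphs: two tuples are adjacent
iff they agree in all but one coordinate, in which they are adjacent. For an indexed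
family this agrees (up to the obvious isomorphism) with the associatively iterated
binary box product `G_1 □ ⋯ □ G_k`. -/
def piBoxProd {ι : Type*} {V : ι → Type*} (G : ∀ i, SimpleGraph (V i)) :
    SimpleGraph (∀ i, V i) where
  Adj x y := ∃ i, (G i).Adj (x i) (y i) ∧ ∀ j, j ≠ i → x j = y j
  symm := by
    constructor
    rintro x y ⟨i, ha, he⟩
    exact ⟨i, ha.symm, fun j hj => (he j hj).symm⟩
  loopless := by
    constructor
    rintro x ⟨i, ha, -⟩
    exact (G i).loopless.irrefl _ ha

/-!
A dissection of the `m`-gon containing the cell `T` has no diagonal crossing a side of `T`, so each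
diagonal lies in one of the sub-polygons cut off by the sides: the dissection is the set of those
sides together with one dissection of each sub-polygon, and its cells are `T` and the cells of the
pieces. Which dissections are `k`-angulations is decided by the cells alone, because cutting along a
diagonal shows by induction that cells of size `k` force `m = (k - 2) * (#diagonals + 1) + 2`. The
number of diagonals in which two dissections with cell `T` differ is the sum of the numbers for the
pieces, so a flip is a flip in exactly one piece.
-/

section Arc

variable {m : ℕ} {a b x y : Fin m} {F : Finset (Fin m)} {e f : Sym2 (Fin m)}

lemma val_sub_eq_ite (a x : Fin m) :
    (x - a).val = if a.val ≤ x.val then x.val - a.val else m + x.val - a.val := by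
  split_ifs with h
  · exact Fin.sub_val_of_le h
  · rw [Fin.coe_sub_iff_lt.2 (not_le.1 h)]

lemma val_sub_eq_ite_of_origin (o a x : Fin m) :
    (x - a).val = if (a - o).val ≤ (x - o).val then (x - o).val - (a - o).val
      else m + (x - o).val - (a - o).val := by
  have : NeZero m := ⟨o.pos.ne'⟩
  rw [← val_sub_eq_ite, sub_sub_sub_cancel_right]

lemma val_sub_self (a : Fin m) : (a - a).val = 0 := by
  simp [val_sub_eq_ite]

lemma val_add_one_sub_self [NeZero m] (hm : 2 ≤ m) (a : Fin m) : (a + 1 - a).val = 1 := by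
  rw [add_sub_cancel_left, Fin.val_one', Nat.mod_eq_of_lt hm]

lemma val_sub_inj (o : Fin m) : (a - o).val = (b - o).val ↔ a = b := by
  have : NeZero m := ⟨o.pos.ne'⟩
  rw [Fin.val_inj, sub_left_inj]

lemma val_sub_pos_iff : 0 < (b - a).val ↔ a ≠ b := by
  rw [Nat.pos_iff_ne_zero, ← val_sub_self a, Ne, val_sub_inj, ne_comm]

lemma val_sub_add_val_sub (hab : a ≠ b) : (b - a).val + (a - b).val = m := by
  have hpos := val_sub_pos_iff.2 hab
  have h0 := val_sub_self a
  have := val_sub_eq_ite_of_origin a b a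
  split_ifs at this <;> omega

/-- The closed arc of the convex `m`-gon from `a` counterclockwise to `b`: the vertices of the
sub-polygon cut off by the chord `s(a, b)`, which has `(b - a).val + 1` vertices. -/
def arc (a b : Fin m) : Finset (Fin m) := {x | (x - a).val ≤ (b - a).val}

lemma mem_arc : x ∈ arc a b ↔ (x - a).val ≤ (b - a).val := by
  simp [arc]

lemma left_mem_arc (a b : Fin m) : a ∈ arc a b := by
  simp [mem_arc, val_sub_self]

lemma right_mem_arc (a b : Fin m) : b ∈ arc a b :=
  mem_arc.2 le_rfl

lemma mem_arc_swap_iff (hab : a ≠ b) :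
    x ∈ arc b a ↔ x = a ∨ (b - a).val ≤ (x - a).val := by
  have := x.isLt
  have := (x - a).isLt
  have hpos := val_sub_pos_iff.2 hab
  have h0 := val_sub_self a
  rw [mem_arc, ← val_sub_inj a, val_sub_eq_ite_of_origin a b x, val_sub_eq_ite_of_origin a b a]
  split_ifs <;> omega

lemma cycBtw_iff_notMem_arc (hab : a ≠ b) : CycBtw a b x ↔ x ∉ arc b a := by
  rw [mem_arc_swap_iff hab, CycBtw, val_sub_pos_iff, ne_comm, not_or, not_le]

lemma mem_arc_or_mem_arc_swap (hab : a ≠ b) (x : Fin m) : x ∈ arc a b ∨ x ∈ arc b a := by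
  rw [mem_arc, mem_arc_swap_iff hab]
  exact (le_total _ _).imp_right Or.inr

lemma eq_or_eq_of_mem_arc_of_mem_arc_swap (hab : a ≠ b) (hx : x ∈ arc a b) (hx' : x ∈ arc b a) :
    x = a ∨ x = b := by
  refine ((mem_arc_swap_iff hab).1 hx').imp_right fun h => ?_
  exact (val_sub_inj a).1 ((mem_arc.1 hx).antisymm h)

lemma eq_of_forall_mem_arc_of_forall_mem_arc_swap (hab : a ≠ b) (he : ¬ e.IsDiag)
    (h : ∀ x ∈ e, x ∈ arc a b) (h' : ∀ x ∈ e, x ∈ arc b a) : e = s(a, b) := by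
  induction e with
  | _ c d =>
    have hc := eq_or_eq_of_mem_arc_of_mem_arc_swap hab (h c (by simp)) (h' c (by simp))
    have hd := eq_or_eq_of_mem_arc_of_mem_arc_swap hab (h d (by simp)) (h' d (by simp))
    rw [Sym2.mk_isDiag_iff] at he
    grind

lemma arc_swap_eq_univ (h : (b - a).val = 1) : arc b a = univ := by
  have hab : a ≠ b := val_sub_pos_iff.1 (by omega)
  refine eq_univ_of_forall fun x => (mem_arc_swap_iff hab).2 ?_
  rw [h, Nat.one_le_iff_ne_zero, ← Nat.pos_iff_ne_zero, val_sub_pos_iff, ne_comm]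
  exact em _

lemma PolyAdj.ne (h : PolyAdj a b) : a ≠ b := by
  rcases h with h | h
  · exact val_sub_pos_iff.1 (by omega)
  · exact (val_sub_pos_iff.1 (by omega)).symm

lemma isSide_mk_iff : IsSide s(a, b) ↔ PolyAdj a b := by
  refine ⟨?_, fun h => ⟨a, b, rfl, h⟩⟩
  rintro ⟨c, d, h, hcd⟩
  rcases Sym2.eq_iff.1 h with ⟨rfl, rfl⟩ | ⟨rfl, rfl⟩
  exacts [hcd, hcd.symm]

lemma isDiagonal_iff : IsDiagonal e ↔ ¬ e.IsDiag ∧ ¬ IsSide e := by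
  simp only [IsDiagonal, IsSide, not_exists, not_and]

/-- Stated for `a ≠ b`, since `CycBtw a a x` never holds while `arc a a = {a}`. -/
lemma not_crosses_iff (hab : a ≠ b) :
    ¬ Crosses s(a, b) e ↔ (∀ x ∈ e, x ∈ arc a b) ∨ ∀ x ∈ e, x ∈ arc b a := by
  induction e with
  | _ c d =>
    have xor_mk (p : Fin m → Prop) :
        (∃ c' d', s(c, d) = s(c', d') ∧ Xor (p c') (p d')) ↔ Xor (p c) (p d) := by
      refine ⟨?_, fun h => ⟨c, d, rfl, h⟩⟩
      rintro ⟨c', d', h, hx⟩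
      rcases Sym2.eq_iff.1 h with ⟨rfl, rfl⟩ | ⟨rfl, rfl⟩
      exacts [hx, hx.symm]
    have crosses_mk : Crosses s(a, b) s(c, d) ↔
        Xor (c ∉ arc b a) (d ∉ arc b a) ∧ Xor (c ∉ arc a b) (d ∉ arc a b) := by
      simp only [← cycBtw_iff_notMem_arc hab, ← cycBtw_iff_notMem_arc hab.symm, ← xor_mk]
      refine ⟨fun h => ⟨h a b rfl, h b a Sym2.eq_swap⟩, fun h x y hxy => ?_⟩
      rcases Sym2.eq_iff.1 hxy with ⟨rfl, rfl⟩ | ⟨rfl, rfl⟩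
      exacts [h.1, h.2]
    have hc := mem_arc_or_mem_arc_swap hab c
    have hd := mem_arc_or_mem_arc_swap hab d
    rw [crosses_mk, Sym2.ball, Sym2.ball]
    grind

lemma arc_swap_subset_arc_swap (hx : (x - a).val < (y - a).val) (hy : y ∈ arc a b) :
    arc b a ⊆ arc y x := by
  intro z hz
  have hxy : x ≠ y := fun h => hx.ne (by rw [h])
  have hab : a ≠ b := val_sub_pos_iff.1 (by have := mem_arc.1 hy; omega)
  have hya := mem_arc.1 hy
  have := (x - a).isLt
  rw [mem_arc_swap_iff hab, ← val_sub_inj a, val_sub_self] at hz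
  rw [mem_arc_swap_iff hxy, ← val_sub_inj a, val_sub_eq_ite_of_origin a x y,
    val_sub_eq_ite_of_origin a x z]
  split_ifs <;> omega

lemma not_crosses_of_forall_mem_arc (he : ∀ x ∈ e, x ∈ arc a b) (hf : ∀ x ∈ f, x ∈ arc b a) :
    ¬ Crosses e f := by
  induction e with
  | _ c d =>
    rcases lt_trichotomy (c - a).val (d - a).val with h | h | h
    · rw [not_crosses_iff (by rintro rfl; exact h.ne rfl)]
      exact Or.inr fun x hx => arc_swap_subset_arc_swap h (he d (by simp)) (hf x hx)
    · intro hcr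
      obtain rfl := (val_sub_inj a).1 h
      obtain ⟨x, y, -, ⟨h, -⟩ | ⟨h, -⟩⟩ := hcr c c rfl <;>
        exact (h.1.trans h.2).ne (val_sub_self c).symm
    · rw [not_crosses_iff (by rintro rfl; exact h.ne rfl)]
      exact Or.inl fun x hx => arc_swap_subset_arc_swap h (he c (by simp)) (hf x hx)

lemma nextIn_iff : NextIn F a b ↔ a ∈ F ∧ b ∈ F ∧ a ≠ b ∧ F ⊆ arc b a := by
  refine and_congr_right' (and_congr_right' (and_congr_right fun hab => ?_))
  simp only [cycBtw_iff_notMem_arc hab, not_not]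
  rfl

lemma NextIn.right_unique (hx : NextIn F a x) (hy : NextIn F a y) : x = y := by
  rw [nextIn_iff] at hx hy
  have hxy := ((mem_arc_swap_iff hx.2.2.1).1 (hx.2.2.2 hy.2.1)).resolve_left hy.2.2.1.symm
  have hyx := ((mem_arc_swap_iff hy.2.2.1).1 (hy.2.2.2 hx.2.1)).resolve_left hx.2.2.1.symm
  exact (val_sub_inj a).1 (hxy.antisymm hyx)

end Arc

section Dissection

variable {m : ℕ} {t : Finset (Sym2 (Fin m))} {e f : Sym2 (Fin m)} {a b x y : Fin m}
  {F G : Finset (Fin m)}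

/-- A set of pairwise non-crossing diagonals of the convex `m`-gon. -/
def IsDissection (t : Finset (Sym2 (Fin m))) : Prop :=
  (∀ e ∈ t, IsDiagonal e) ∧ ∀ e ∈ t, ∀ f ∈ t, ¬ Crosses e f

lemma IsSide.exists_val_sub_eq_one (he : IsSide e) : ∃ a b, e = s(a, b) ∧ (b - a).val = 1 := by
  obtain ⟨a, b, rfl, h | h⟩ := he
  exacts [⟨a, b, rfl, h⟩, ⟨b, a, Sym2.eq_swap, h⟩]

lemma IsSide.not_crosses_left (he : IsSide e) : ¬ Crosses e f := by
  obtain ⟨a, b, rfl, hab⟩ := he.exists_val_sub_eq_one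
  refine not_crosses_of_forall_mem_arc (a := a) (b := b) ?_ fun x _ => ?_
  · simp [left_mem_arc, right_mem_arc]
  · simp [arc_swap_eq_univ hab]

lemma IsSide.not_crosses_right (he : IsSide e) : ¬ Crosses f e := by
  obtain ⟨a, b, rfl, hab⟩ := he.exists_val_sub_eq_one
  refine not_crosses_of_forall_mem_arc (a := b) (b := a) (fun x _ => ?_) ?_
  · simp [arc_swap_eq_univ hab]
  · simp [left_mem_arc, right_mem_arc]

lemma IsDissection.not_crosses (ht : IsDissection t) (he : EdgeOfD t e) (hf : EdgeOfD t f) :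
    ¬ Crosses e f := by
  rcases he with he | he
  · exact he.not_crosses_left
  rcases hf with hf | hf
  · exact hf.not_crosses_right
  · exact ht.2 e he f hf

lemma PolyAdj.nextIn_or_nextIn (h : PolyAdj a b) (ha : a ∈ F) (hb : b ∈ F) :
    NextIn F a b ∨ NextIn F b a := by
  simp only [nextIn_iff]
  rcases h with h | h
  · exact Or.inl ⟨ha, hb, PolyAdj.ne (Or.inl h), by simp [arc_swap_eq_univ h]⟩
  · exact Or.inr ⟨hb, ha, PolyAdj.ne (Or.inl h), by simp [arc_swap_eq_univ h]⟩

lemma isFaceSet_iff : IsFaceSet t F ↔ 3 ≤ F.card ∧ (∀ a b, NextIn F a b → EdgeOfD t s(a, b)) ∧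
    ∀ a ∈ F, ∀ b ∈ F, EdgeOfD t s(a, b) → NextIn F a b ∨ NextIn F b a := by
  refine and_congr_right' (and_congr_right' ⟨fun h a ha b hb hab => ?_, ?_⟩)
  · rcases hab with hab | hab
    · exact (isSide_mk_iff.1 hab).nextIn_or_nextIn ha hb
    · exact h _ hab a b rfl ha hb
  · rintro h _ he a b rfl ha hb
    exact h a ha b hb (Or.inr he)

lemma exists_nextIn (hF : F.Nontrivial) (ha : a ∈ F) : ∃ b, NextIn F a b := by
  obtain ⟨b, hb, hmin⟩ := exists_min_image (F.erase a) (fun x => (x - a).val)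
    hF.erase_nonempty
  have hba := ne_of_mem_erase hb
  refine ⟨b, nextIn_iff.2 ⟨ha, mem_of_mem_erase hb, hba.symm, fun x hx => ?_⟩⟩
  rw [mem_arc_swap_iff hba.symm, or_iff_not_imp_left]
  exact fun hxa => hmin x (mem_erase.2 ⟨hxa, hx⟩)

/-- Going around `F` from a vertex strictly inside the arc `[a, b]`, the last vertex before
leaving the arc can only be `b`. -/
lemma right_mem_of_forall_nextIn (hab : a ≠ b)
    (hF : ∀ c d, NextIn F c d → (c ∈ arc a b ∧ d ∈ arc a b) ∨ (c ∈ arc b a ∧ d ∈ arc b a))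
    (hx : x ∈ F) (hxb : x ∉ arc b a) (hy : y ∈ F) (hya : y ∉ arc a b) : b ∈ F := by
  have hxa := (mem_arc_or_mem_arc_swap hab x).resolve_right hxb
  obtain ⟨c, hc, hmax⟩ := exists_max_image (F.filter (· ∈ arc a b)) (fun z => (z - a).val)
    ⟨x, mem_filter.2 ⟨hx, hxa⟩⟩
  obtain ⟨hcF, hca⟩ := mem_filter.1 hc
  have hxc := hmax x (mem_filter.2 ⟨hx, hxa⟩)
  by_contra hbF
  have hcb : c ∉ arc b a := by
    intro hcb
    rcases eq_or_eq_of_mem_arc_of_mem_arc_swap hab hca hcb with rfl | rfl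
    · rw [val_sub_self, nonpos_iff_eq_zero, ← val_sub_self c, val_sub_inj] at hxc
      exact hxb (hxc ▸ right_mem_arc _ _)
    · exact hbF hcF
  obtain ⟨d, hcd⟩ := exists_nextIn ⟨x, hx, y, hy, by rintro rfl; exact hya hxa⟩ hcF
  obtain ⟨-, hdF, hne, hsub⟩ := nextIn_iff.1 hcd
  have hda := ((hF c d hcd).resolve_right fun h => hcb h.1).2
  have hdc := (hmax d (mem_filter.2 ⟨hdF, hda⟩)).lt_of_ne fun h => hne ((val_sub_inj a).1 h).symm
  have hyb := (mem_arc_or_mem_arc_swap hab y).resolve_left hya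
  rcases eq_or_eq_of_mem_arc_of_mem_arc_swap hne (arc_swap_subset_arc_swap hdc hca hyb)
    (hsub hy) with rfl | rfl
  exacts [hya hca, hya hda]

lemma IsFaceSet.subset_arc_or_subset_arc (hF : IsFaceSet t F) (ht : IsDissection t)
    (hab : a ≠ b) (he : EdgeOfD t s(a, b)) : F ⊆ arc a b ∨ F ⊆ arc b a := by
  by_contra! h
  obtain ⟨hxF, hyF⟩ := h
  obtain ⟨y, hy, hya⟩ := not_subset.1 hxF
  obtain ⟨x, hx, hxb⟩ := not_subset.1 hyF
  obtain ⟨-, hE, hD⟩ := isFaceSet_iff.1 hF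
  have same_side (c d : Fin m) (hcd : NextIn F c d) :
      (c ∈ arc a b ∧ d ∈ arc a b) ∨ (c ∈ arc b a ∧ d ∈ arc b a) := by
    simpa only [not_crosses_iff hab, Sym2.ball] using ht.not_crosses he (hE c d hcd)
  have hb := right_mem_of_forall_nextIn hab same_side hx hxb hy hya
  have ha := right_mem_of_forall_nextIn hab.symm (fun c d h => (same_side c d h).symm)
    hy hya hx hxb
  rcases hD a ha b hb he with h | h
  · exact hyF (nextIn_iff.1 h).2.2.2
  · exact hxF (nextIn_iff.1 h).2.2.2

lemma card_le_two_of_subset_arc_of_subset_arc_swap (hab : a ≠ b) (h : F ⊆ arc a b)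
    (h' : F ⊆ arc b a) : F.card ≤ 2 := by
  refine (card_le_card fun x hx => ?_).trans (card_le_two (a := a) (b := b))
  simpa using eq_or_eq_of_mem_arc_of_mem_arc_swap hab (h hx) (h' hx)

lemma IsFaceSet.eq_of_subset (hF : IsFaceSet t F) (hG : IsFaceSet t G) (hFG : F ⊆ G) :
    F = G := by
  obtain ⟨hF3, hE, -⟩ := hF
  refine hFG.antisymm fun g hg => by_contra fun hgF => ?_
  obtain ⟨a, ha, hmin⟩ := exists_min_image F (fun x => (g - x).val)
    (card_pos.1 (by omega))
  obtain ⟨b, hnext⟩ := exists_nextIn (one_lt_card_iff_nontrivial.1 (by omega)) ha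
  obtain ⟨-, hb, hab, hsub⟩ := nextIn_iff.1 hnext
  have hgb : g ∉ arc b a := by
    intro h
    rcases (mem_arc_swap_iff hab).1 h with rfl | h
    · exact hgF ha
    · have := hmin b hb
      have hpos := val_sub_pos_iff.2 hab
      rw [val_sub_eq_ite_of_origin a b g, if_pos h] at this
      omega
  rcases (isFaceSet_iff.1 hG).2.2 a (hFG ha) b (hFG hb) (hE a b hnext) with h | h
  · exact hgb ((nextIn_iff.1 h).2.2.2 hg)
  · have := card_le_two_of_subset_arc_of_subset_arc_swap hab
      (hFG.trans (nextIn_iff.1 h).2.2.2) hsub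
    omega

end Dissection

section SubPolygon

variable {m p : ℕ} {a b o : Fin m} {x y z : Fin p} {e f : Sym2 (Fin p)} {F : Finset (Fin p)}
  {t : Finset (Sym2 (Fin m))}

/-- Numbers the vertices of the sub-polygon on the `p` consecutive vertices `o, o + 1, …` of the
convex `m`-gon; only meaningful for `p ≤ m`. -/
def arcEmb (o : Fin m) (p : ℕ) (x : Fin p) : Fin m :=
  ⟨(o.val + x.val) % m, Nat.mod_lt _ o.pos⟩

lemma val_arcEmb_sub (hp : p ≤ m) (x : Fin p) : (arcEmb o p x - o).val = x.val := by
  have := o.isLt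
  have := x.isLt
  rw [val_sub_eq_ite]
  rcases lt_or_ge (o.val + x.val) m with h | h
  · have : (arcEmb o p x).val = o.val + x.val := Nat.mod_eq_of_lt h
    rw [if_pos] <;> omega
  · have : (arcEmb o p x).val = o.val + x.val - m :=
      (Nat.mod_eq_sub_mod h).trans (Nat.mod_eq_of_lt (by omega))
    rw [if_neg] <;> omega

lemma arcEmb_val_sub (hp : p ≤ m) {x : Fin m} (hx : (x - o).val < p) :
    arcEmb o p ⟨_, hx⟩ = x :=
  (val_sub_inj o).1 (val_arcEmb_sub hp _)

lemma arcEmb_injective (hp : p ≤ m) : Function.Injective (arcEmb o p) := by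
  intro x y hxy
  rw [Fin.ext_iff, ← val_arcEmb_sub hp x, ← val_arcEmb_sub hp y, hxy]

lemma arcEmb_sub_arcEmb (hp : p ≤ m) (x y : Fin p) : (arcEmb o p y - arcEmb o p x).val =
    if x.val ≤ y.val then y.val - x.val else m + y.val - x.val := by
  rw [val_sub_eq_ite_of_origin o, val_arcEmb_sub hp, val_arcEmb_sub hp]

lemma arcEmb_mem_arc_iff (hp : p ≤ m) :
    arcEmb o p z ∈ arc (arcEmb o p x) (arcEmb o p y) ↔ z ∈ arc x y := by
  rw [mem_arc, mem_arc, arcEmb_sub_arcEmb hp, arcEmb_sub_arcEmb hp, val_sub_eq_ite x z,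
    val_sub_eq_ite x y]
  split_ifs <;> omega

lemma nextIn_image_arcEmb_iff (hp : p ≤ m) :
    NextIn (F.image (arcEmb o p)) (arcEmb o p x) (arcEmb o p y) ↔ NextIn F x y := by
  simp only [nextIn_iff, (arcEmb_injective hp).mem_finset_image, (arcEmb_injective hp).ne_iff,
    subset_iff, forall_mem_image, arcEmb_mem_arc_iff hp]

lemma crosses_map_arcEmb_iff (hp : p ≤ m) (he : ¬ e.IsDiag) :
    Crosses (e.map (arcEmb o p)) (f.map (arcEmb o p)) ↔ Crosses e f := by
  induction e with
  | _ x y =>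
    rw [Sym2.mk_isDiag_iff] at he
    rw [← not_iff_not, Sym2.map_mk, not_crosses_iff he,
      not_crosses_iff ((arcEmb_injective hp).ne he)]
    simp only [Sym2.mem_map, forall_exists_index, and_imp, forall_apply_eq_imp_iff₂,
      arcEmb_mem_arc_iff hp]

lemma image_univ_arcEmb (h : (b - a).val + 1 = p) : univ.image (arcEmb a p) = arc a b := by
  have hp : p ≤ m := h ▸ (b - a).isLt
  ext x
  simp only [mem_image, mem_univ, true_and, mem_arc]
  rw [← Nat.lt_succ_iff, Nat.succ_eq_add_one, h]
  refine ⟨?_, fun hx => ⟨_, arcEmb_val_sub hp hx⟩⟩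
  rintro ⟨y, rfl⟩
  exact (val_arcEmb_sub hp y).trans_lt y.isLt

lemma forall_mem_arc_iff_exists_map_arcEmb (h : (b - a).val + 1 = p) {e : Sym2 (Fin m)} :
    (∀ x ∈ e, x ∈ arc a b) ↔ ∃ f, Sym2.map (arcEmb a p) f = e := by
  simp only [← image_univ_arcEmb h, mem_image, mem_univ, true_and]
  constructor
  · induction e with
    | _ x y =>
      intro hxy
      obtain ⟨x, rfl⟩ := hxy x (by simp)
      obtain ⟨y, rfl⟩ := hxy y (by simp)
      exact ⟨s(x, y), rfl⟩
  · rintro ⟨f, rfl⟩ x hx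
    obtain ⟨y, -, rfl⟩ := Sym2.mem_map.1 hx
    exact ⟨y, rfl⟩

lemma isSide_iff_map_arcEmb (h : (b - a).val + 1 = p) (hab : a ≠ b) :
    IsSide e ↔ IsSide (e.map (arcEmb a p)) ∨ e.map (arcEmb a p) = s(a, b) := by
  have hp : p ≤ m := h ▸ (b - a).isLt
  have hpos := val_sub_pos_iff.2 hab
  induction e with
  | _ x y =>
    have := x.isLt
    have := y.isLt
    rw [Sym2.map_mk, isSide_mk_iff, isSide_mk_iff, PolyAdj, PolyAdj, Sym2.eq_iff,
      ← val_sub_inj a, ← val_sub_inj a, ← val_sub_inj a, ← val_sub_inj a, val_sub_self,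
      val_arcEmb_sub hp, val_arcEmb_sub hp, arcEmb_sub_arcEmb hp, arcEmb_sub_arcEmb hp,
      val_sub_eq_ite x y, val_sub_eq_ite y x]
    split_ifs <;> omega

lemma isDiagonal_iff_map_arcEmb (h : (b - a).val + 1 = p) (hab : a ≠ b) :
    IsDiagonal e ↔ IsDiagonal (e.map (arcEmb a p)) ∧ e.map (arcEmb a p) ≠ s(a, b) := by
  have hp : p ≤ m := h ▸ (b - a).isLt
  rw [isDiagonal_iff, isDiagonal_iff, isSide_iff_map_arcEmb h hab, not_or,
    Sym2.isDiag_map (arcEmb_injective hp), and_assoc]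

open scoped Classical in
/-- The diagonals of `t` inside the sub-polygon on the `p` vertices `a, a + 1, …`, other than its
closing chord, renumbered as diagonals of a convex `p`-gon. -/
noncomputable def subDissection (a : Fin m) (p : ℕ) (t : Finset (Sym2 (Fin m))) :
    Finset (Sym2 (Fin p)) :=
  {e | IsDiagonal e ∧ e.map (arcEmb a p) ∈ t}

lemma mem_subDissection : e ∈ subDissection a p t ↔ IsDiagonal e ∧ e.map (arcEmb a p) ∈ t := by
  simp [subDissection]

lemma subDissection_sdiff (a : Fin m) (p : ℕ) (t u : Finset (Sym2 (Fin m))) :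
    subDissection a p (t \ u) = subDissection a p t \ subDissection a p u := by
  ext e
  simp only [mem_subDissection, mem_sdiff]
  tauto

open scoped Classical in
lemma image_map_arcEmb_subDissection (h : (b - a).val + 1 = p) (hab : a ≠ b)
    (ht : ∀ e ∈ t, IsDiagonal e) :
    (subDissection a p t).image (Sym2.map (arcEmb a p)) =
      {e ∈ t | (∀ x ∈ e, x ∈ arc a b) ∧ e ≠ s(a, b)} := by
  ext e
  simp only [mem_image, mem_filter, mem_subDissection, isDiagonal_iff_map_arcEmb h hab,
    forall_mem_arc_iff_exists_map_arcEmb h]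
  constructor
  · rintro ⟨f, ⟨⟨-, hf⟩, hft⟩, rfl⟩
    exact ⟨hft, ⟨f, rfl⟩, hf⟩
  · rintro ⟨he, ⟨f, rfl⟩, hne⟩
    exact ⟨f, ⟨⟨ht _ he, hne⟩, he⟩, rfl⟩

open scoped Classical in
lemma card_subDissection (h : (b - a).val + 1 = p) (hab : a ≠ b) (ht : ∀ e ∈ t, IsDiagonal e) :
    (subDissection a p t).card = #{e ∈ t | (∀ x ∈ e, x ∈ arc a b) ∧ e ≠ s(a, b)} := by
  have hp : p ≤ m := h ▸ (b - a).isLt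
  rw [← image_map_arcEmb_subDissection h hab ht,
    card_image_of_injective _ (Sym2.map.injective (arcEmb_injective hp))]

lemma IsDissection.subDissection (ht : IsDissection t) (hp : p ≤ m) :
    IsDissection (subDissection a p t) := by
  refine ⟨fun e he => (mem_subDissection.1 he).1, fun e he f hf => ?_⟩
  obtain ⟨hed, het⟩ := mem_subDissection.1 he
  rw [← crosses_map_arcEmb_iff hp hed.1]
  exact ht.2 _ het _ (mem_subDissection.1 hf).2

lemma edgeOfD_subDissection_iff (h : (b - a).val + 1 = p) (hab : a ≠ b)
    (hd : ∀ e ∈ t, IsDiagonal e) (ht : EdgeOfD t s(a, b)) :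
    EdgeOfD (subDissection a p t) e ↔ EdgeOfD t (e.map (arcEmb a p)) := by
  have closing (he : e.map (arcEmb a p) = s(a, b)) : EdgeOfD t (e.map (arcEmb a p)) := he ▸ ht
  have diag := hd (e.map (arcEmb a p))
  rw [EdgeOfD, mem_subDissection, isDiagonal_iff_map_arcEmb h hab, isSide_iff_map_arcEmb h hab]
  rw [EdgeOfD] at closing ⊢
  tauto

lemma isFaceSet_subDissection_iff (h : (b - a).val + 1 = p) (hab : a ≠ b)
    (hd : ∀ e ∈ t, IsDiagonal e) (ht : EdgeOfD t s(a, b)) :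
    IsFaceSet (subDissection a p t) F ↔ IsFaceSet t (F.image (arcEmb a p)) := by
  have hp : p ≤ m := h ▸ (b - a).isLt
  rw [isFaceSet_iff, isFaceSet_iff, card_image_of_injective _ (arcEmb_injective hp)]
  simp only [forall_mem_image, nextIn_image_arcEmb_iff hp, edgeOfD_subDissection_iff h hab hd ht,
    Sym2.map_mk]
  refine and_congr_right' (and_congr_left' ⟨fun H x y hxy => ?_, fun H x y hxy => ?_⟩)
  · obtain ⟨x, -, rfl⟩ := mem_image.1 hxy.1
    obtain ⟨y, -, rfl⟩ := mem_image.1 hxy.2.1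
    exact H x y ((nextIn_image_arcEmb_iff hp).1 hxy)
  · exact H _ _ ((nextIn_image_arcEmb_iff hp).2 hxy)

lemma card_eq_of_isFaceSet_subDissection {k : ℕ} (h : (b - a).val + 1 = p) (hab : a ≠ b)
    (hd : ∀ e ∈ t, IsDiagonal e) (ht : EdgeOfD t s(a, b)) (hk : ∀ G, IsFaceSet t G → G.card = k)
    (hF : IsFaceSet (subDissection a p t) F) : F.card = k := by
  have hp : p ≤ m := h ▸ (b - a).isLt
  rw [← card_image_of_injective F (arcEmb_injective (o := a) hp)]
  exact hk _ ((isFaceSet_subDissection_iff h hab hd ht).1 hF)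

end SubPolygon

section Inscribed

variable {m : ℕ} {ι : Type*} {v : ι → Fin m} {next : ι → ι} {p : ι → ℕ} {j l : ι} {x y : Fin m}
  {e : Sym2 (Fin m)} {t : Finset (Sym2 (Fin m))} {F : Finset (Fin m)}

lemma exists_val_sub_lt_val_sub [Finite ι] [Nonempty ι] (hne : ∀ j, v j ≠ v (next j)) (x : Fin m) :
    ∃ j, (x - v j).val < (v (next j) - v j).val := by
  obtain ⟨j, hj⟩ := Finite.exists_min fun j => (x - v j).val
  refine ⟨j, not_le.1 fun hle => ?_⟩
  have := val_sub_pos_iff.2 (hne j)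
  have := hj (next j)
  rw [val_sub_eq_ite_of_origin (v j) (v (next j)) x, if_pos hle] at this
  omega

/-- The vertices `v j` of the convex `m`-gon, with `v (next j)` following `v j` counterclockwise,
span a polygon: going from each `v j` to `v (next j)` winds around the `m`-gon exactly once, that
is, the half-open arcs `[v j, v (next j))` are nonempty and partition the vertices. -/
structure IsInscribed (v : ι → Fin m) (next : ι → ι) : Prop where
  ne : ∀ j, v j ≠ v (next j)
  existsUnique_arc : ∀ x, ∃! j, (x - v j).val < (v (next j) - v j).val

namespace IsInscribed

lemma of_sum [Fintype ι] (hne : ∀ j, v j ≠ v (next j))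
    (hsum : ∑ j, (v (next j) - v j).val = m) : IsInscribed v next := by
  refine ⟨hne, fun x => ?_⟩
  have : Nonempty ι := by
    by_contra hι
    rw [not_nonempty_iff] at hι
    simp only [univ_eq_empty, sum_empty] at hsum
    exact x.pos.ne hsum
  let φ : (Σ j, Fin (v (next j) - v j).val) → Fin m := fun y => arcEmb (v y.1) _ y.2
  have hφ : Function.Surjective φ := fun x => by
    obtain ⟨j, hj⟩ := exists_val_sub_lt_val_sub hne x
    exact ⟨⟨j, _, hj⟩, arcEmb_val_sub (Fin.is_lt _).le hj⟩
  have hcard : Fintype.card (Σ j, Fin (v (next j) - v j).val) = Fintype.card (Fin m) := by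
    simpa using hsum
  have hinj := ((Fintype.bijective_iff_surjective_and_card φ).2 ⟨hφ, hcard⟩).1
  obtain ⟨j, hj⟩ := exists_val_sub_lt_val_sub hne x
  refine ⟨j, hj, fun l hl => ?_⟩
  have heq : φ ⟨l, _, hl⟩ = φ ⟨j, _, hj⟩ :=
    (arcEmb_val_sub (Fin.is_lt _).le hl).trans (arcEmb_val_sub (Fin.is_lt _).le hj).symm
  exact congrArg Sigma.fst (hinj heq)

lemma of_chord {a b : Fin m} (hab : a ≠ b) : IsInscribed ![a, b] ![1, 0] :=
  of_sum (by simp [Fin.forall_fin_two, hab, hab.symm])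
    (by simpa using val_sub_add_val_sub hab)

lemma of_polygon [NeZero m] (hm : 2 ≤ m) : IsInscribed (id : Fin m → Fin m) (· + 1) :=
  of_sum (fun j => val_sub_pos_iff.1 (by simp only [id, val_add_one_sub_self hm, one_pos]))
    (by simp only [id, val_add_one_sub_self hm, sum_const, card_univ, Fintype.card_fin,
      smul_eq_mul, mul_one])

section

variable (h : IsInscribed v next)
include h

lemma arc_subset_arc_swap (hjl : l ≠ j) :
    arc (v l) (v (next l)) ⊆ arc (v (next j)) (v j) := by
  have hll := val_sub_pos_iff.2 (h.ne l)
  have hjj := val_sub_pos_iff.2 (h.ne j)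
  have h0 := val_sub_self (v j)
  have h0' := val_sub_self (v l)
  have hlj : (v (next j) - v j).val ≤ (v l - v j).val := not_lt.1 fun hlt =>
    hjl ((h.existsUnique_arc (v l)).unique (by omega) hlt)
  have hjl' : (v (next l) - v l).val ≤ (v j - v l).val := not_lt.1 fun hlt =>
    hjl ((h.existsUnique_arc (v j)).unique hlt (by omega))
  intro x hx
  have := mem_arc.1 hx
  rw [mem_arc_swap_iff (h.ne j), ← val_sub_inj (v j)]
  rw [val_sub_eq_ite_of_origin (v j) (v l) (v j)] at hjl'
  rw [val_sub_eq_ite_of_origin (v j) (v l) x] at this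
  split_ifs at this hjl' <;> omega

lemma injective : Function.Injective v := by
  intro j l hjl
  refine (h.existsUnique_arc (v j)).unique ?_ ?_
  · rw [val_sub_self, val_sub_pos_iff]
    exact h.ne j
  · rw [hjl, val_sub_self, val_sub_pos_iff]
    exact h.ne l

lemma eq_side_of_forall_mem_arc (hjl : l ≠ j) (he : ¬ e.IsDiag)
    (hj : ∀ x ∈ e, x ∈ arc (v j) (v (next j))) (hl : ∀ x ∈ e, x ∈ arc (v l) (v (next l))) :
    e = s(v j, v (next j)) :=
  eq_of_forall_mem_arc_of_forall_mem_arc_swap (h.ne j) he hj fun x hx =>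
    h.arc_subset_arc_swap hjl (hl x hx)

lemma not_crosses_side (he : ∃ l, ∀ x ∈ e, x ∈ arc (v l) (v (next l))) :
    ¬ Crosses s(v j, v (next j)) e ∧ ¬ Crosses e s(v j, v (next j)) := by
  have he : (∀ x ∈ e, x ∈ arc (v j) (v (next j))) ∨ ∀ x ∈ e, x ∈ arc (v (next j)) (v j) := by
    obtain ⟨l, hl⟩ := he
    rcases eq_or_ne l j with rfl | hlj
    · exact Or.inl hl
    · exact Or.inr fun x hx => h.arc_subset_arc_swap hlj (hl x hx)
  refine ⟨(not_crosses_iff (h.ne j)).2 he, ?_⟩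
  rcases he with he | he
  all_goals exact not_crosses_of_forall_mem_arc he (by simp [left_mem_arc, right_mem_arc])

variable [Fintype ι]

lemma mem_image_iff : x ∈ univ.image v ↔ ∀ j, x ∈ arc (v (next j)) (v j) := by
  simp only [mem_image, mem_univ, true_and]
  constructor
  · rintro ⟨l, rfl⟩ j
    rcases eq_or_ne l j with rfl | hlj
    · exact right_mem_arc _ _
    · exact h.arc_subset_arc_swap hlj (left_mem_arc _ _)
  · intro hx
    obtain ⟨j, hj, -⟩ := h.existsUnique_arc x
    exact ⟨j, (((mem_arc_swap_iff (h.ne j)).1 (hx j)).resolve_right hj.not_ge).symm⟩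

lemma nextIn_image_iff : NextIn (univ.image v) x y ↔ ∃ j, v j = x ∧ v (next j) = y := by
  have next_in (j : ι) : NextIn (univ.image v) (v j) (v (next j)) :=
    nextIn_iff.2 ⟨mem_image_of_mem v (mem_univ j), mem_image_of_mem v (mem_univ _), h.ne j,
      fun x hx => h.mem_image_iff.1 hx j⟩
  refine ⟨fun hxy => ?_, ?_⟩
  · obtain ⟨j, -, rfl⟩ := mem_image.1 hxy.1
    exact ⟨j, rfl, (next_in j).right_unique hxy⟩
  · rintro ⟨j, rfl, rfl⟩
    exact next_in j

lemma isFaceSet_image (hcard : 3 ≤ Fintype.card ι) (hd : ∀ e ∈ t, IsDiagonal e)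
    (hside : ∀ j, EdgeOfD t s(v j, v (next j)))
    (hcover : ∀ e ∈ t, ∃ j, ∀ x ∈ e, x ∈ arc (v j) (v (next j))) :
    IsFaceSet t (univ.image v) := by
  refine ⟨by rwa [card_image_of_injective _ h.injective], fun a b hab => ?_, ?_⟩
  · obtain ⟨j, rfl, rfl⟩ := h.nextIn_image_iff.1 hab
    exact hside j
  · rintro _ he a b rfl ha hb
    obtain ⟨j, hj⟩ := hcover _ he
    have heq : s(a, b) = s(v j, v (next j)) :=
      eq_of_forall_mem_arc_of_forall_mem_arc_swap (h.ne j) (hd _ he).1 hj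
        (Sym2.ball.2 ⟨h.mem_image_iff.1 ha j, h.mem_image_iff.1 hb j⟩)
    simp only [h.nextIn_image_iff]
    rcases Sym2.eq_iff.1 heq with ⟨rfl, rfl⟩ | ⟨rfl, rfl⟩
    exacts [Or.inl ⟨j, rfl, rfl⟩, Or.inr ⟨j, rfl, rfl⟩]

lemma edgeOfD_side (hF : IsFaceSet t (univ.image v)) (j : ι) : EdgeOfD t s(v j, v (next j)) :=
  hF.2.1 _ _ (h.nextIn_image_iff.2 ⟨j, rfl, rfl⟩)

lemma exists_forall_mem_arc (hF : IsFaceSet t (univ.image v)) (ht : IsDissection t) (he : e ∈ t) :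
    ∃ j, ∀ x ∈ e, x ∈ arc (v j) (v (next j)) := by
  by_contra! hout
  have hin (j : ι) : ∀ x ∈ e, x ∈ arc (v (next j)) (v j) := by
    refine ((not_crosses_iff (h.ne j)).1
      (ht.not_crosses (h.edgeOfD_side hF j) (Or.inr he))).resolve_left ?_
    simpa using hout j
  induction e with
  | _ a b =>
    have ha := h.mem_image_iff.2 fun j => hin j a (by simp)
    have hb := h.mem_image_iff.2 fun j => hin j b (by simp)
    rcases hF.2.2 _ he a b rfl ha hb with hab | hab
    all_goals
      obtain ⟨j, rfl, rfl⟩ := h.nextIn_image_iff.1 hab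
      simpa [left_mem_arc, right_mem_arc] using hout j

lemma eq_image_or_exists_subset_arc (hF : IsFaceSet t (univ.image v)) (ht : IsDissection t)
    (hG : IsFaceSet t F) : F = univ.image v ∨ ∃ j, F ⊆ arc (v j) (v (next j)) := by
  refine or_iff_not_imp_right.2 fun hout => hG.eq_of_subset hF fun x hx => ?_
  rw [not_exists] at hout
  exact h.mem_image_iff.2 fun j =>
    (hG.subset_arc_or_subset_arc ht (h.ne j) (h.edgeOfD_side hF j)).resolve_left (hout j) hx

open scoped Classical in
lemma sum_card_subDissection (hp : ∀ j, (v (next j) - v j).val + 1 = p j)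
    (hd : ∀ e ∈ t, IsDiagonal e) (hcover : ∀ e ∈ t, ∃ j, ∀ x ∈ e, x ∈ arc (v j) (v (next j))) :
    ∑ j, (subDissection (v j) (p j) t).card = #{e ∈ t | ∀ j, e ≠ s(v j, v (next j))} := by
  simp only [card_subDissection (hp _) (h.ne _) hd]
  rw [← card_biUnion]
  · congr 1
    ext e
    simp only [mem_biUnion, mem_univ, true_and, mem_filter]
    constructor
    · rintro ⟨j, he, hj, hne⟩
      refine ⟨he, ?_⟩
      rintro l rfl
      rcases eq_or_ne l j with rfl | hlj
      · exact hne rfl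
      · exact hne (h.eq_side_of_forall_mem_arc hlj (hd _ he).1 hj
          (Sym2.ball.2 ⟨left_mem_arc _ _, right_mem_arc _ _⟩))
    · rintro ⟨he, hne⟩
      obtain ⟨j, hj⟩ := hcover e he
      exact ⟨j, he, hj, hne j⟩
  · intro j _ l _ hjl
    refine disjoint_filter.2 fun e he hj hl => hj.2 ?_
    exact h.eq_side_of_forall_mem_arc hjl.symm (hd e he).1 hj.1 hl.1

end

end IsInscribed

end Inscribed

section Euler

variable {m k n : ℕ} {a b : Fin m} {e : Sym2 (Fin m)} {t : Finset (Sym2 (Fin m))}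

lemma IsDiagonal.two_le_val_sub (h : IsDiagonal s(a, b)) : 2 ≤ (b - a).val := by
  have hab : a ≠ b := by simpa using h.1
  have hpos := val_sub_pos_iff.2 hab
  have hne : (b - a).val ≠ 1 := fun h1 => h.2 a b rfl (Or.inl h1)
  omega

lemma IsDiagonal.four_le (h : IsDiagonal e) : 4 ≤ m := by
  induction e with
  | _ a b =>
    have hab : a ≠ b := by simpa using h.1
    have := h.two_le_val_sub
    have := (Sym2.eq_swap ▸ h : IsDiagonal s(b, a)).two_le_val_sub
    have := val_sub_add_val_sub hab
    omega

lemma card_subDissection_add_card_subDissection (ht : IsDissection t) (he : s(a, b) ∈ t) :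
    (subDissection a ((b - a).val + 1) t).card + (subDissection b ((a - b).val + 1) t).card + 1 =
      t.card := by
  classical
  have hab : a ≠ b := by simpa using (ht.1 _ he).1
  have hcover : ∀ f ∈ t, ∃ j : Fin 2, ∀ x ∈ f, x ∈ arc (![a, b] j) (![a, b] (![1, 0] j)) := by
    intro f hf
    simpa [Fin.exists_fin_two] using (not_crosses_iff hab).1 (ht.2 _ he f hf)
  rw [← card_erase_add_one he, add_left_inj]
  calc
    _ = ∑ j : Fin 2, (subDissection (![a, b] j)
          ((![a, b] (![1, 0] j) - ![a, b] j).val + 1) t).card := by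
      rw [Fin.sum_univ_two]
      rfl
    _ = _ := (IsInscribed.of_chord hab).sum_card_subDissection (fun _ => rfl) ht.1 hcover
    _ = (t.erase s(a, b)).card := congrArg card <| by
      ext f
      simp [Fin.forall_fin_two, Sym2.eq_swap (a := b), and_comm]

lemma isFaceSet_empty_univ (hm : 3 ≤ m) : IsFaceSet (∅ : Finset (Sym2 (Fin m))) univ := by
  have : NeZero m := ⟨by omega⟩
  have hm2 : 2 ≤ m := by omega
  rw [← image_id (s := univ)]
  exact (IsInscribed.of_polygon hm2).isFaceSet_image (by simpa using hm) (by simp)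
    (fun j => Or.inl (isSide_mk_iff.2 (Or.inl (val_add_one_sub_self hm2 j)))) (by simp)

/-- A diagonal of `t` cuts the `m`-gon into two polygons with `m + 2` vertices in total, to which
induction applies. -/
theorem IsDissection.eq_of_forall_isFaceSet_card_eq (ht : IsDissection t) (hm : 3 ≤ m)
    (hk : ∀ F, IsFaceSet t F → F.card = k) : m = (k - 2) * (t.card + 1) + 2 := by
  induction m using Nat.strong_induction_on with
  | _ m ih =>
    rcases t.eq_empty_or_nonempty with rfl | ⟨e, he⟩
    · have := hk univ (isFaceSet_empty_univ hm)
      rw [card_univ, Fintype.card_fin] at this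
      rw [card_empty]
      omega
    · induction e with
      | _ a b =>
        have hab : a ≠ b := by simpa using (ht.1 _ he).1
        have h_ab := (ht.1 _ he).two_le_val_sub
        have h_ba := (Sym2.eq_swap ▸ ht.1 _ he : IsDiagonal s(b, a)).two_le_val_sub
        have hm' := val_sub_add_val_sub hab
        have left := ih ((b - a).val + 1) (by omega) (ht.subDissection (a := a) (by omega))
          (by omega) fun _ => card_eq_of_isFaceSet_subDissection rfl hab ht.1 (Or.inr he) hk
        have right := ih ((a - b).val + 1) (by omega) (ht.subDissection (a := b) (by omega))
          (by omega) fun _ =>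
            card_eq_of_isFaceSet_subDissection rfl hab.symm ht.1 (Or.inr (Sym2.eq_swap ▸ he)) hk
        rw [← card_subDissection_add_card_subDissection ht he]
        linarith

theorem isKAngulation_iff (hk : 3 ≤ k) {t : Finset (Sym2 (Fin ((k - 2) * n + 2)))} :
    IsKAngulation k n t ↔ IsDissection t ∧ ∀ F, IsFaceSet t F → F.card = k := by
  refine ⟨fun h => ⟨⟨h.1, h.2.1⟩, h.2.2.2⟩, fun ⟨ht, hF⟩ => ⟨ht.1, ht.2, ?_, hF⟩⟩
  rcases Nat.eq_zero_or_pos n with rfl | hn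
  · rw [card_eq_zero, eq_empty_iff_forall_notMem]
    intro e he
    simpa using (ht.1 e he).four_le
  · have hpos : 0 < (k - 2) * n := by
      have : 0 < k - 2 := by omega
      positivity
    have := ht.eq_of_forall_isFaceSet_card_eq (by omega) hF
    have := Nat.eq_of_mul_eq_mul_left (by omega) (Nat.add_right_cancel this)
    omega

end Euler

section Glue

variable {m : ℕ} {ι : Type*} [Fintype ι] {v : ι → Fin m} {next : ι → ι} {p : ι → ℕ}
  {e : Sym2 (Fin m)} {t : Finset (Sym2 (Fin m))} {s : ∀ j, Finset (Sym2 (Fin (p j)))}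

open scoped Classical in
/-- Dissections `s j` of the sub-polygons cut off by the sides of the polygon with vertices `v j`,
put together with those sides (except the ones that are sides of the `m`-gon). -/
noncomputable def glue (v : ι → Fin m) (next : ι → ι) (s : ∀ j, Finset (Sym2 (Fin (p j)))) :
    Finset (Sym2 (Fin m)) :=
  (univ.biUnion fun j => (s j).image (Sym2.map (arcEmb (v j) (p j)))) ∪
    {e ∈ univ.image fun j => s(v j, v (next j)) | IsDiagonal e}

lemma mem_glue : e ∈ glue v next s ↔ (∃ j, ∃ f ∈ s j, f.map (arcEmb (v j) (p j)) = e) ∨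
    (∃ j, s(v j, v (next j)) = e) ∧ IsDiagonal e := by
  simp [glue]

lemma exists_forall_mem_arc_of_mem_glue (hp : ∀ j, (v (next j) - v j).val + 1 = p j)
    (he : e ∈ glue v next s) : ∃ j, ∀ x ∈ e, x ∈ arc (v j) (v (next j)) := by
  rcases mem_glue.1 he with ⟨j, f, -, rfl⟩ | ⟨⟨j, rfl⟩, -⟩
  · exact ⟨j, (forall_mem_arc_iff_exists_map_arcEmb (hp j)).2 ⟨f, rfl⟩⟩
  · exact ⟨j, by simp [left_mem_arc, right_mem_arc]⟩

namespace IsInscribed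

variable (h : IsInscribed v next)
include h

lemma edgeOfD_glue (j : ι) : EdgeOfD (glue v next s) s(v j, v (next j)) := by
  refine or_iff_not_imp_left.2 fun hside => mem_glue.2 (Or.inr ⟨⟨j, rfl⟩, ?_⟩)
  exact isDiagonal_iff.2 ⟨by simpa using h.ne j, hside⟩

variable (hp : ∀ j, (v (next j) - v j).val + 1 = p j)
include hp

lemma isDissection_glue (hs : ∀ j, IsDissection (s j)) : IsDissection (glue v next s) := by
  have hle (j : ι) : p j ≤ m := hp j ▸ (v (next j) - v j).isLt
  constructor
  · intro e he
    rcases mem_glue.1 he with ⟨j, f, hf, rfl⟩ | ⟨-, he⟩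
    · exact ((isDiagonal_iff_map_arcEmb (hp j) (h.ne j)).1 ((hs j).1 f hf)).1
    · exact he
  · intro e he f hf
    have he_arc := exists_forall_mem_arc_of_mem_glue hp he
    have hf_arc := exists_forall_mem_arc_of_mem_glue hp hf
    rcases mem_glue.1 he with ⟨j, e, hej, rfl⟩ | ⟨⟨j, rfl⟩, -⟩
    swap
    · exact (h.not_crosses_side hf_arc).1
    rcases mem_glue.1 hf with ⟨l, f, hfl, rfl⟩ | ⟨⟨l, rfl⟩, -⟩
    swap
    · exact (h.not_crosses_side he_arc).2
    rcases eq_or_ne l j with rfl | hlj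
    · rw [crosses_map_arcEmb_iff (hle l) ((hs l).1 e hej).1]
      exact (hs l).2 e hej f hfl
    · exact not_crosses_of_forall_mem_arc
        ((forall_mem_arc_iff_exists_map_arcEmb (hp j)).2 ⟨e, rfl⟩) fun x hx =>
          h.arc_subset_arc_swap hlj
            ((forall_mem_arc_iff_exists_map_arcEmb (hp l)).2 ⟨f, rfl⟩ x hx)

lemma subDissection_glue (hs : ∀ j, ∀ e ∈ s j, IsDiagonal e) (j : ι) :
    subDissection (v j) (p j) (glue v next s) = s j := by
  have hle : p j ≤ m := hp j ▸ (v (next j) - v j).isLt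
  ext e
  refine mem_subDissection.trans ⟨fun ⟨hd, he⟩ => ?_, fun he => ⟨hs j e he, ?_⟩⟩
  · obtain ⟨hd, hne⟩ := (isDiagonal_iff_map_arcEmb (hp j) (h.ne j)).1 hd
    rcases mem_glue.1 he with ⟨l, f, hf, heq⟩ | ⟨⟨l, heq⟩, -⟩ <;>
      rcases eq_or_ne l j with rfl | hlj
    · exact Sym2.map.injective (arcEmb_injective hle) heq ▸ hf
    · refine absurd (h.eq_side_of_forall_mem_arc hlj hd.1 ?_ ?_) hne
      · exact (forall_mem_arc_iff_exists_map_arcEmb (hp j)).2 ⟨e, rfl⟩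
      · exact (forall_mem_arc_iff_exists_map_arcEmb (hp l)).2 ⟨f, heq⟩
    · exact absurd heq.symm hne
    · refine absurd (h.eq_side_of_forall_mem_arc hlj hd.1 ?_ ?_) hne
      · exact (forall_mem_arc_iff_exists_map_arcEmb (hp j)).2 ⟨e, rfl⟩
      · simp [← heq, left_mem_arc, right_mem_arc]
  · exact mem_glue.2 (Or.inl ⟨j, e, he, rfl⟩)

lemma glue_subDissection (ht : IsDissection t) (hF : IsFaceSet t (univ.image v)) :
    glue v next (fun j => subDissection (v j) (p j) t) = t := by
  ext e
  simp only [mem_glue, mem_subDissection]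
  constructor
  · rintro (⟨j, f, ⟨-, hf⟩, rfl⟩ | ⟨⟨j, rfl⟩, hd⟩)
    · exact hf
    · exact (h.edgeOfD_side hF j).resolve_left (isDiagonal_iff.1 hd).2
  · intro he
    obtain ⟨j, hj⟩ := h.exists_forall_mem_arc hF ht he
    obtain ⟨f, rfl⟩ := (forall_mem_arc_iff_exists_map_arcEmb (hp j)).1 hj
    by_cases hside : f.map (arcEmb (v j) (p j)) = s(v j, v (next j))
    · exact Or.inr ⟨⟨j, hside.symm⟩, ht.1 _ he⟩
    · exact Or.inl ⟨j, f,
        ⟨(isDiagonal_iff_map_arcEmb (hp j) (h.ne j)).2 ⟨ht.1 _ he, hside⟩, he⟩, rfl⟩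

lemma isFaceSet_glue (hcard : 3 ≤ Fintype.card ι) (hs : ∀ j, IsDissection (s j)) :
    IsFaceSet (glue v next s) (univ.image v) :=
  h.isFaceSet_image hcard (h.isDissection_glue hp hs).1 h.edgeOfD_glue fun _ =>
    exists_forall_mem_arc_of_mem_glue hp

lemma forall_isFaceSet_card_eq_iff {k : ℕ} (hcard : Fintype.card ι = k) (ht : IsDissection t)
    (hF : IsFaceSet t (univ.image v)) :
    (∀ F, IsFaceSet t F → F.card = k) ↔
      ∀ j, ∀ F, IsFaceSet (subDissection (v j) (p j) t) F → F.card = k := by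
  refine ⟨fun hk j F => card_eq_of_isFaceSet_subDissection (hp j) (h.ne j) ht.1
    (h.edgeOfD_side hF j) hk, fun hk F hFt => ?_⟩
  rcases h.eq_image_or_exists_subset_arc hF ht hFt with rfl | ⟨j, hj⟩
  · rw [card_image_of_injective _ h.injective, card_univ, hcard]
  · have hle : p j ≤ m := hp j ▸ (v (next j) - v j).isLt
    obtain ⟨G, -, rfl⟩ := subset_image_iff.1 (hj.trans (image_univ_arcEmb (hp j)).ge)
    rw [card_image_of_injective _ (arcEmb_injective hle)]
    exact hk j G ((isFaceSet_subDissection_iff (hp j) (h.ne j) ht.1 (h.edgeOfD_side hF j)).2 hFt)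

lemma card_sdiff_eq_sum {t' : Finset (Sym2 (Fin m))}
    (ht : IsDissection t) (hF : IsFaceSet t (univ.image v))
    (hF' : IsFaceSet t' (univ.image v)) :
    (t \ t').card =
      ∑ j, (subDissection (v j) (p j) t \ subDissection (v j) (p j) t').card := by
  classical
  simp only [← subDissection_sdiff]
  rw [h.sum_card_subDissection hp (fun e he => ht.1 e (mem_sdiff.1 he).1)
    fun e he => h.exists_forall_mem_arc hF ht (mem_sdiff.1 he).1, filter_true_of_mem]
  rintro e he j rfl
  obtain ⟨he, he'⟩ := mem_sdiff.1 he
  exact he' ((h.edgeOfD_side hF' j).resolve_left (isDiagonal_iff.1 (ht.1 _ he)).2)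

end IsInscribed

end Glue

section FlipGraph

variable {k n : ℕ} {ι : Type*} [Fintype ι] {i : ι → ℕ} {v : ι → Fin ((k - 2) * n + 2)}
  {next : ι → ι} {s t : KAngulation k n}

lemma sum_eq_one_iff {c : ι → ℕ} : ∑ j, c j = 1 ↔ ∃ j, c j = 1 ∧ ∀ l, l ≠ j → c l = 0 := by
  classical
  constructor
  · intro h
    obtain ⟨j, -, hj⟩ := exists_ne_zero_of_sum_ne_zero (h.trans_ne one_ne_zero)
    rw [← add_sum_erase _ _ (mem_univ j)] at h
    refine ⟨j, by omega, fun l hl => ?_⟩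
    exact sum_eq_zero_iff.1 (by omega) l (mem_erase.2 ⟨hl, mem_univ l⟩)
  · rintro ⟨j, hj, hl⟩
    rw [Fintype.sum_eq_single j hl, hj]

namespace KAngulation

lemma card_eq (s : KAngulation k n) : s.1.card = n - 1 :=
  s.2.2.2.1

lemma kAngGraph_adj_iff : (kAngGraph k n).Adj s t ↔ (s.1 \ t.1).card = 1 := by
  refine ⟨And.left, fun h => ⟨h, ?_⟩⟩
  rwa [card_sdiff_comm (t.card_eq.trans s.card_eq.symm)]

lemma card_sdiff_eq_zero_iff : (s.1 \ t.1).card = 0 ↔ s = t := by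
  rw [card_eq_zero, sdiff_eq_empty_iff_subset]
  refine ⟨fun h => Subtype.ext ?_, fun h => h ▸ Subset.rfl⟩
  exact eq_of_subset_of_card_le h (t.card_eq.trans s.card_eq.symm).le

end KAngulation

namespace IsInscribed

variable (h : IsInscribed v next)
  (hv : ∀ j, (v (next j) - v j).val = (k - 2) * i j + 1)
include h hv

lemma isKAngulation_subDissection (hk : 3 ≤ k) (hcard : Fintype.card ι = k)
    {t : Finset (Sym2 (Fin ((k - 2) * n + 2)))} (ht : IsKAngulation k n t)
    (hF : IsFaceSet t (univ.image v)) (j : ι) :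
    IsKAngulation k (i j) (subDissection (v j) ((k - 2) * i j + 2) t) := by
  have hp (j : ι) : (v (next j) - v j).val + 1 = (k - 2) * i j + 2 := by rw [hv]
  obtain ⟨ht, hk'⟩ := (isKAngulation_iff hk).1 ht
  exact (isKAngulation_iff hk).2 ⟨ht.subDissection (hp j ▸ (v (next j) - v j).isLt),
    (h.forall_isFaceSet_card_eq_iff hp hcard ht hF).1 hk' j⟩

lemma isKAngulation_glue (hk : 3 ≤ k) (hcard : Fintype.card ι = k)
    {s : ∀ j, Finset (Sym2 (Fin ((k - 2) * i j + 2)))} (hs : ∀ j, IsKAngulation k (i j) (s j)) :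
    IsKAngulation k n (glue v next s) := by
  have hp (j : ι) : (v (next j) - v j).val + 1 = (k - 2) * i j + 2 := by rw [hv]
  have hs' (j : ι) := (isKAngulation_iff hk).1 (hs j)
  have hglue := h.isDissection_glue hp fun j => (hs' j).1
  have hF := h.isFaceSet_glue hp (hcard ▸ hk) fun j => (hs' j).1
  refine (isKAngulation_iff hk).2 ⟨hglue, ?_⟩
  rw [h.forall_isFaceSet_card_eq_iff hp hcard hglue hF]
  intro j
  rw [h.subDissection_glue hp fun j => (hs' j).1.1]
  exact (hs' j).2

/-- A `k`-angulation with the cell `v` amounts to a `k`-angulation of each of the sub-polygons cut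
off by the sides of the cell. -/
noncomputable def kAngulationEquiv (hk : 3 ≤ k) (hcard : Fintype.card ι = k) :
    {t : KAngulation k n // IsFaceSet t.1 (univ.image v)} ≃ ∀ j, KAngulation k (i j) where
  toFun t j := ⟨_, h.isKAngulation_subDissection hv hk hcard t.1.2 t.2 j⟩
  invFun s := ⟨⟨_, h.isKAngulation_glue hv hk hcard fun j => (s j).2⟩,
    h.isFaceSet_glue (fun j => by rw [hv]) (hcard ▸ hk) fun j =>
      ((isKAngulation_iff hk).1 (s j).2).1⟩
  left_inv t := Subtype.ext <| Subtype.ext <|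
    h.glue_subDissection (fun j => by rw [hv]) ((isKAngulation_iff hk).1 t.1.2).1 t.2
  right_inv s := funext fun j => Subtype.ext <|
    h.subDissection_glue (fun j => by rw [hv]) (fun j => (s j).2.1) j

/-- `kAngulationEquiv` as an isomorphism of flip graphs: a flip that keeps the cell `v` happens
inside a single sub-polygon. -/
noncomputable def kAngGraphIso (hk : 3 ≤ k) (hcard : Fintype.card ι = k) :
    (kAngGraph k n).induce {t | IsFaceSet t.1 (univ.image v)} ≃g
      piBoxProd fun j => kAngGraph k (i j) where
  toEquiv := h.kAngulationEquiv hv hk hcard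
  map_rel_iff' {s t} := by
    have hs := ((isKAngulation_iff hk).1 s.1.2).1
    rw [SimpleGraph.induce_adj, KAngulation.kAngGraph_adj_iff,
      h.card_sdiff_eq_sum (fun j => by rw [hv]) hs s.2 t.2, sum_eq_one_iff]
    simp only [piBoxProd, KAngulation.kAngGraph_adj_iff, ← KAngulation.card_sdiff_eq_zero_iff]
    rfl

end IsInscribed

end FlipGraph

/-- let `k ≥ 3`, `n ≥ 2`, and let `T` be a `k`-gon whose vertices
`v 0, v 1, …, v (k-1)` (in cyclic order) lie among the vertices of the convex
`((k-2)n+2)`-gon, the arc from `v j` to `v (j+1)` having length `(k-2)·i j + 1`, with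
`∑ j, i j = n - 1`. Then the set of `k`-angulations containing `T` as one of their
`k`-gons induces a subgraph of the flip graph `K_{k,(k-2)n+2}` isomorphic to the
Cartesian product of the flip graphs `K_{k,(k-2)·i j+2}` of the `k` sub-polygons cut
off by the sides of `T`. -/
theorem kgon_class_isomorphic_boxProd (k n : ℕ) (hk : 3 ≤ k) (hn : 2 ≤ n)
    (v : Fin k → Fin ((k - 2) * n + 2)) (i : Fin k → ℕ)
    (harc : ∀ j : Fin k,
      (v ⟨(j.val + 1) % k, Nat.mod_lt _ (by omega)⟩ - v j).val = (k - 2) * i j + 1)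
    (hsum : ∑ j : Fin k, i j = n - 1) :
    Nonempty (((kAngGraph k n).induce
        {t : KAngulation k n | IsFaceSet t.val (Finset.image v Finset.univ)}) ≃g
      piBoxProd (fun j : Fin k => kAngGraph k (i j))) := by
  let next : Fin k → Fin k := fun j => ⟨(j.val + 1) % k, Nat.mod_lt _ (by omega)⟩
  have once_around : ∑ j, (v (next j) - v j).val = (k - 2) * n + 2 := by
    obtain ⟨n, rfl⟩ : ∃ n', n = n' + 1 := ⟨n - 1, by omega⟩
    simp only [next, harc, sum_add_distrib, ← mul_sum, hsum, sum_const, card_univ,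
      Fintype.card_fin, smul_eq_mul, mul_one, add_tsub_cancel_right]
    rw [mul_add_one, add_assoc, Nat.sub_add_cancel (by omega)]
  have inscribed : IsInscribed v next :=
    .of_sum (fun j => val_sub_pos_iff.1 ((harc j).symm ▸ Nat.succ_pos _)) once_around
  exact ⟨inscribed.kAngGraphIso harc hk (Fintype.card_fin k)⟩
end

section
/- For every n ≥ 1, every integer k with 1 ≤ k ≤ n, and every triangulation t of the convex (n+2)-gon, there exist a subset S ⊆ V(K_n) with t ∈ S and natural numbers i_1, …, i_k such that the subgraph of the associahedron graph K_n induced by S is isomorphic to the Cartesian product K_{i_1} □ K_{i_2} □ ⋯ □ K_{i_k}, and i_j ≤ n / 2^{⌊log_3 k⌋} for every j. -/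
open Finset

/-- A triangulation of the convex `(n+2)`-gon: a maximal set of pairwise
non-crossing diagonals. -/
def IsTriangulation (n : ℕ) (t : Finset (Sym2 (Fin (n + 2)))) : Prop :=
  (∀ e ∈ t, IsDiagonal e) ∧
  (∀ e ∈ t, ∀ f ∈ t, ¬ Crosses e f) ∧
  (∀ e, IsDiagonal e → (∀ f ∈ t, ¬ Crosses e f) → e ∈ t)

/-- The type of triangulations of the convex `(n+2)`-gon. -/
def Triangulation (n : ℕ) : Type :=
  {t : Finset (Sym2 (Fin (n + 2))) // IsTriangulation n t}

instance (n : ℕ) : DecidableEq (Triangulation n) := fun a b =>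
  decidable_of_iff (a.val = b.val) Subtype.ext_iff.symm

noncomputable instance (n : ℕ) : Fintype (Triangulation n) := by
  classical exact Subtype.fintype _

/-- The associahedron graph `K_n`: vertices are the triangulations of the convex
`(n+2)`-gon, with an edge between two triangulations iff they differ in exactly
one diagonal (a flip). -/
def assocGraph (n : ℕ) : SimpleGraph (Triangulation n) where
  Adj s t := (s.val \ t.val).card = 1 ∧ (t.val \ s.val).card = 1
  symm := ⟨fun s t h => ⟨h.2, h.1⟩⟩
  loopless := ⟨fun s h => by simp at h⟩

/-- The set of edges of `G` with exactly one endpoint in `S`. -/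
def edgeBoundary {V : Type*} (G : SimpleGraph V) (S : Set V) : Set (Sym2 V) :=
  {e | e ∈ G.edgeSet ∧ ∃ u v : V, e = s(u, v) ∧ u ∈ S ∧ v ∉ S}

/-!
The triangulations containing a given diagonal `e` induce in `K_n` a copy of `K_a □ K_b` with
`a + b = n`, where `a` and `b` count the triangles on the two sides of `e`. For `n ≥ 2` the dual
tree of `t` has a centroid: a triangle of `t` beyond each side of which lie at most `n / 2`
triangles. Cutting off the two largest of these three parts, so that the centroid stays with the
smallest one, leaves three polygons with at most `n / 2` triangles each. After `⌊log_3 k⌋` rounds of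
such cuts there are at most `k` factors, all of index at most `n / 2 ^ ⌊log_3 k⌋`, and copies of the
one-vertex graph `K_0` make up the missing ones.

The indices obtained in this way add up to `n`. This is kept in
`triangulation_mem_boxProd_class_general`, where it excludes the trivial choice of `S = {t}` with
all indices `0`.
-/

section ChordTriangulation

variable {α : Type*} [LinearOrder α] {A B : Finset α} {S T : Finset (α × α)} {e f g : α × α}

/-- `e` is a chord of the convex polygon with vertex set `A`, vertices being ordered around it.
A chord is the increasing pair of its endpoints, and sides of the polygon count as chords. -/
def IsChord (A : Finset α) (e : α × α) : Prop :=
  e.1 ∈ A ∧ e.2 ∈ A ∧ e.1 < e.2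

instance : DecidablePred (IsChord A) := fun _ => inferInstanceAs (Decidable (_ ∧ _ ∧ _))

/-- Two chords, given as increasing pairs, cross: their endpoints alternate. -/
def ChordsCross (e f : α × α) : Prop :=
  (e.1 < f.1 ∧ f.1 < e.2 ∧ e.2 < f.2) ∨ (f.1 < e.1 ∧ e.1 < f.2 ∧ f.2 < e.2)

/-- A triangulation of the convex polygon with vertex set `A`: a maximal set of pairwise
non-crossing chords. It contains all the sides, which makes cutting and gluing along a chord plain
restriction and union. -/
def IsChordTriangulation (A : Finset α) (T : Finset (α × α)) : Prop :=
  ∀ e, e ∈ T ↔ IsChord A e ∧ ∀ f ∈ T, ¬ ChordsCross e f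

/-- The vertices on the closed arc that the chord `e` spans. -/
def insidePart (A : Finset α) (e : α × α) : Finset α :=
  {x ∈ A | e.1 ≤ x ∧ x ≤ e.2}

/-- The vertices on the other side of the chord `e`, its endpoints included. -/
def outsidePart (A : Finset α) (e : α × α) : Finset α :=
  {x ∈ A | ¬ (e.1 < x ∧ x < e.2)}

lemma mem_insidePart {x : α} : x ∈ insidePart A e ↔ x ∈ A ∧ e.1 ≤ x ∧ x ≤ e.2 :=
  mem_filter

lemma mem_outsidePart {x : α} : x ∈ outsidePart A e ↔ x ∈ A ∧ ¬ (e.1 < x ∧ x < e.2) :=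
  mem_filter

lemma insidePart_subset : insidePart A e ⊆ A :=
  filter_subset _ _

lemma outsidePart_subset : outsidePart A e ⊆ A :=
  filter_subset _ _

lemma IsChord.mono (hf : IsChord A f) (h : A ⊆ B) : IsChord B f :=
  ⟨h hf.1, h hf.2.1, hf.2.2⟩

lemma IsChord.insidePart_self (he : IsChord A e) : IsChord (insidePart A e) e := by
  grind [IsChord, mem_insidePart]

lemma IsChord.outsidePart_self (he : IsChord A e) : IsChord (outsidePart A e) e := by
  grind [IsChord, mem_outsidePart]

lemma ChordsCross.symm (h : ChordsCross e f) : ChordsCross f e :=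
  Or.symm h

lemma not_chordsCross_of_insidePart_outsidePart (hf : IsChord (insidePart A e) f)
    (hg : IsChord (outsidePart A e) g) : ¬ ChordsCross f g := by
  grind [IsChord, ChordsCross, mem_insidePart, mem_outsidePart]

lemma IsChord.insidePart_or_outsidePart (hf : IsChord A f) (h : ¬ ChordsCross f e) :
    IsChord (insidePart A e) f ∨ IsChord (outsidePart A e) f := by
  grind [IsChord, ChordsCross, mem_insidePart, mem_outsidePart]

lemma IsChord.eq_of_insidePart_of_outsidePart (hf : IsChord (insidePart A e) f)
    (hf' : IsChord (outsidePart A e) f) : f = e := by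
  ext <;> grind [IsChord, mem_insidePart, mem_outsidePart]

namespace IsChordTriangulation

lemma isChord (hT : IsChordTriangulation A T) (he : e ∈ T) : IsChord A e :=
  ((hT e).1 he).1

lemma not_chordsCross (hT : IsChordTriangulation A T) (he : e ∈ T) (hf : f ∈ T) :
    ¬ ChordsCross e f :=
  ((hT e).1 he).2 f hf

lemma eq_of_subset (hS : IsChordTriangulation A S) (hT : IsChordTriangulation A T)
    (h : S ⊆ T) : S = T :=
  h.antisymm fun e he => (hS e).2 ⟨hT.isChord he, fun _ hf => hT.not_chordsCross he (h hf)⟩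

lemma restrict_insidePart (hT : IsChordTriangulation A T) (he : e ∈ T) :
    IsChordTriangulation (insidePart A e) {f ∈ T | IsChord (insidePart A e) f} := by
  refine fun f => ⟨fun hf => ?_, fun ⟨hf, hcross⟩ => ?_⟩
  · rw [mem_filter] at hf
    exact ⟨hf.2, fun g hg => hT.not_chordsCross hf.1 (mem_filter.1 hg).1⟩
  · refine mem_filter.2 ⟨(hT f).2 ⟨hf.mono insidePart_subset, fun g hg => ?_⟩, hf⟩
    obtain h | h := (hT.isChord hg).insidePart_or_outsidePart (hT.not_chordsCross hg he)
    · exact hcross g (mem_filter.2 ⟨hg, h⟩)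
    · exact not_chordsCross_of_insidePart_outsidePart hf h

lemma restrict_outsidePart (hT : IsChordTriangulation A T) (he : e ∈ T) :
    IsChordTriangulation (outsidePart A e) {f ∈ T | IsChord (outsidePart A e) f} := by
  refine fun f => ⟨fun hf => ?_, fun ⟨hf, hcross⟩ => ?_⟩
  · rw [mem_filter] at hf
    exact ⟨hf.2, fun g hg => hT.not_chordsCross hf.1 (mem_filter.1 hg).1⟩
  · refine mem_filter.2 ⟨(hT f).2 ⟨hf.mono outsidePart_subset, fun g hg => ?_⟩, hf⟩
    obtain h | h := (hT.isChord hg).insidePart_or_outsidePart (hT.not_chordsCross hg he)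
    · exact fun hfg => not_chordsCross_of_insidePart_outsidePart h hf hfg.symm
    · exact hcross g (mem_filter.2 ⟨hg, h⟩)

lemma mem_of_insidePart (hS : IsChordTriangulation (insidePart A e) S) (he : IsChord A e) :
    e ∈ S :=
  (hS e).2 ⟨he.insidePart_self, fun _ hf h =>
    not_chordsCross_of_insidePart_outsidePart (hS.isChord hf) he.outsidePart_self h.symm⟩

lemma mem_of_outsidePart (hT : IsChordTriangulation (outsidePart A e) T) (he : IsChord A e) :
    e ∈ T :=
  (hT e).2 ⟨he.outsidePart_self, fun _ hf =>
    not_chordsCross_of_insidePart_outsidePart he.insidePart_self (hT.isChord hf)⟩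

lemma union (hS : IsChordTriangulation (insidePart A e) S)
    (hT : IsChordTriangulation (outsidePart A e) T) (he : IsChord A e) :
    IsChordTriangulation A (S ∪ T) := by
  refine fun f => ⟨fun hf => ?_, fun ⟨hf, hcross⟩ => ?_⟩
  · rcases mem_union.1 hf with hf | hf
    · refine ⟨(hS.isChord hf).mono insidePart_subset, fun g hg => ?_⟩
      rcases mem_union.1 hg with hg | hg
      · exact hS.not_chordsCross hf hg
      · exact not_chordsCross_of_insidePart_outsidePart (hS.isChord hf) (hT.isChord hg)
    · refine ⟨(hT.isChord hf).mono outsidePart_subset, fun g hg => ?_⟩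
      rcases mem_union.1 hg with hg | hg
      · exact fun h =>
          not_chordsCross_of_insidePart_outsidePart (hS.isChord hg) (hT.isChord hf) h.symm
      · exact hT.not_chordsCross hf hg
  · have he' : ¬ ChordsCross f e := hcross e (mem_union_left T (hS.mem_of_insidePart he))
    obtain h | h := hf.insidePart_or_outsidePart he'
    · exact mem_union_left T ((hS f).2 ⟨h, fun g hg => hcross g (mem_union_left T hg)⟩)
    · exact mem_union_right S ((hT f).2 ⟨h, fun g hg => hcross g (mem_union_right S hg)⟩)

lemma restrict_union_restrict (hT : IsChordTriangulation A T) (he : e ∈ T) :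
    {f ∈ T | IsChord (insidePart A e) f} ∪ {f ∈ T | IsChord (outsidePart A e) f} = T := by
  rw [← filter_or]
  exact filter_true_of_mem fun f hf =>
    (hT.isChord hf).insidePart_or_outsidePart (hT.not_chordsCross hf he)

lemma card_union_sdiff_union {S' T' : Finset (α × α)} (he : IsChord A e)
    (hS : IsChordTriangulation (insidePart A e) S)
    (hT : IsChordTriangulation (outsidePart A e) T)
    (hS' : IsChordTriangulation (insidePart A e) S')
    (hT' : IsChordTriangulation (outsidePart A e) T') :
    #((S ∪ T) \ (S' ∪ T')) = #(S \ S') + #(T \ T') := by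
  have hinter : ∀ f, IsChord (insidePart A e) f → IsChord (outsidePart A e) f →
      f ∈ S' ∧ f ∈ T' := fun f h h' =>
    h.eq_of_insidePart_of_outsidePart h' ▸ ⟨hS'.mem_of_insidePart he, hT'.mem_of_outsidePart he⟩
  rw [← card_union_of_disjoint]
  · congr 1
    grind [IsChordTriangulation.isChord]
  · rw [disjoint_left]
    grind [IsChordTriangulation.isChord]

end IsChordTriangulation

/-- The triangulations, in the sense of `IsChordTriangulation`, of the polygon with vertices `A`. -/
def ChordTriangulation (A : Finset α) : Type _ :=
  {T : Finset (α × α) // IsChordTriangulation A T}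

/-- The flip graph on `ChordTriangulation A`, a relabelled associahedron graph; see
`nonempty_assocGraph_iso_flipGraph`. -/
def flipGraph (A : Finset α) : SimpleGraph (ChordTriangulation A) where
  Adj S T := #(S.1 \ T.1) = 1 ∧ #(T.1 \ S.1) = 1
  symm := ⟨fun _ _ h => h.symm⟩
  loopless := ⟨fun _ h => by simp at h⟩

lemma flipGraph_adj {S T : ChordTriangulation A} :
    (flipGraph A).Adj S T ↔ #(S.1 \ T.1) = 1 ∧ #(T.1 \ S.1) = 1 :=
  Iff.rfl

namespace ChordTriangulation

lemma card_sdiff_eq_zero {S T : ChordTriangulation A} : #(S.1 \ T.1) = 0 ↔ S = T := by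
  rw [card_eq_zero, sdiff_eq_empty_iff_subset]
  exact ⟨fun h => Subtype.ext (S.2.eq_of_subset T.2 h), fun h => h ▸ Subset.rfl⟩

lemma card_sdiff_eq_zero_comm {S T : ChordTriangulation A} :
    #(S.1 \ T.1) = 0 ↔ #(T.1 \ S.1) = 0 := by
  rw [card_sdiff_eq_zero, card_sdiff_eq_zero, eq_comm]

/-- The part of a triangulation on the inner side of one of its chords. -/
def inside (T : ChordTriangulation A) (he : e ∈ T.1) : ChordTriangulation (insidePart A e) :=
  ⟨_, T.2.restrict_insidePart he⟩

/-- The part of a triangulation on the outer side of one of its chords. -/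
def outside (T : ChordTriangulation A) (he : e ∈ T.1) : ChordTriangulation (outsidePart A e) :=
  ⟨_, T.2.restrict_outsidePart he⟩

/-- Gluing triangulations of the two sides of a chord `e` identifies the product of their flip
graphs with the subgraph induced by the triangulations that contain `e`. -/
def glue (he : IsChord A e) :
    (flipGraph (insidePart A e) □ flipGraph (outsidePart A e)) ↪g flipGraph A where
  toFun P := ⟨P.1.1 ∪ P.2.1, P.1.2.union P.2.2 he⟩
  inj' P Q h := by
    have hcard := IsChordTriangulation.card_union_sdiff_union he P.1.2 P.2.2 Q.1.2 Q.2.2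
    rw [card_sdiff_eq_zero.2 h] at hcard
    exact Prod.ext (card_sdiff_eq_zero.1 (by omega)) (card_sdiff_eq_zero.1 (by omega))
  map_rel_iff' {P Q} := by
    have hS : #(P.1.1 \ Q.1.1) = 0 ↔ #(Q.1.1 \ P.1.1) = 0 := card_sdiff_eq_zero_comm
    have hT : #(P.2.1 \ Q.2.1) = 0 ↔ #(Q.2.1 \ P.2.1) = 0 := card_sdiff_eq_zero_comm
    change #((P.1.1 ∪ P.2.1) \ (Q.1.1 ∪ Q.2.1)) = 1 ∧
      #((Q.1.1 ∪ Q.2.1) \ (P.1.1 ∪ P.2.1)) = 1 ↔ _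
    rw [IsChordTriangulation.card_union_sdiff_union he P.1.2 P.2.2 Q.1.2 Q.2.2,
      IsChordTriangulation.card_union_sdiff_union he Q.1.2 Q.2.2 P.1.2 P.2.2,
      SimpleGraph.boxProd_adj, flipGraph_adj, flipGraph_adj, ← card_sdiff_eq_zero,
      ← card_sdiff_eq_zero]
    omega

lemma glue_inside_outside (T : ChordTriangulation A) (he : e ∈ T.1) :
    glue (T.2.isChord he) (T.inside he, T.outside he) = T :=
  Subtype.ext (T.2.restrict_union_restrict he)

end ChordTriangulation

end ChordTriangulation

section OrderEmbedding

variable {α β : Type*} [LinearOrder α] [LinearOrder β] (φ : α ↪o β)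
  {A : Finset α} {T : Finset (α × α)} {e f : α × α}

/-- The action of an order embedding of vertices on chords. -/
def chordEmbedding : α × α ↪ β × β :=
  φ.toEmbedding.prodMap φ.toEmbedding

lemma chordsCross_chordEmbedding :
    ChordsCross (chordEmbedding φ e) (chordEmbedding φ f) ↔ ChordsCross e f := by
  simp [ChordsCross, chordEmbedding]

lemma isChord_map_chordEmbedding :
    IsChord (A.map φ.toEmbedding) (chordEmbedding φ e) ↔ IsChord A e := by
  simp [IsChord, chordEmbedding]

lemma IsChord.exists_chordEmbedding_eq {f : β × β} (hf : IsChord (A.map φ.toEmbedding) f) :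
    ∃ e, chordEmbedding φ e = f := by
  obtain ⟨h₁, h₂, -⟩ := hf
  obtain ⟨a, -, ha⟩ := mem_map.1 h₁
  obtain ⟨b, -, hb⟩ := mem_map.1 h₂
  exact ⟨(a, b), Prod.ext ha hb⟩

lemma isChordTriangulation_map :
    IsChordTriangulation (A.map φ.toEmbedding) (T.map (chordEmbedding φ)) ↔
      IsChordTriangulation A T := by
  have hmem (e : α × α) : (chordEmbedding φ e ∈ T.map (chordEmbedding φ) ↔
      IsChord (A.map φ.toEmbedding) (chordEmbedding φ e) ∧
        ∀ f ∈ T.map (chordEmbedding φ), ¬ ChordsCross (chordEmbedding φ e) f) ↔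
      (e ∈ T ↔ IsChord A e ∧ ∀ f ∈ T, ¬ ChordsCross e f) := by
    simp only [mem_map', forall_mem_map, isChord_map_chordEmbedding, chordsCross_chordEmbedding]
  refine ⟨fun h e => (hmem e).1 (h _), fun h f => ?_⟩
  by_cases hf : ∃ e, chordEmbedding φ e = f
  · obtain ⟨e, rfl⟩ := hf
    exact (hmem e).2 (h e)
  · refine iff_of_false (fun hfT => hf ?_) fun hfA => hf (hfA.1.exists_chordEmbedding_eq φ)
    obtain ⟨e, -, he⟩ := mem_map.1 hfT
    exact ⟨e, he⟩

lemma IsChordTriangulation.exists_map_eq {T' : Finset (β × β)}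
    (hT' : IsChordTriangulation (A.map φ.toEmbedding) T') :
    ∃ T, IsChordTriangulation A T ∧ T.map (chordEmbedding φ) = T' := by
  have hrange : (T' : Set (β × β)) ⊆ chordEmbedding φ '' Set.univ := fun f hf =>
    Set.image_univ ▸ (hT'.isChord hf).exists_chordEmbedding_eq φ
  obtain ⟨T, -, rfl⟩ := subset_set_image_iff.1 hrange
  rw [← map_eq_image] at hT' ⊢
  exact ⟨T, (isChordTriangulation_map φ).1 hT', rfl⟩

end OrderEmbedding

section Polygon

variable {m n : ℕ}

lemma cycBtw_iff_of_lt {a b x : Fin m} (h : a < b) : CycBtw a b x ↔ a < x ∧ x < b := by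
  unfold CycBtw
  rw [Fin.sub_val_of_le h.le]
  rcases le_or_gt a x with hx | hx
  · rw [Fin.sub_val_of_le hx]
    omega
  · rw [Fin.coe_sub_iff_lt.2 hx]
    omega

lemma cycBtw_iff_of_gt {a b x : Fin m} (h : b < a) : CycBtw a b x ↔ a < x ∨ x < b := by
  unfold CycBtw
  rw [Fin.coe_sub_iff_lt.2 h]
  rcases le_or_gt a x with hx | hx
  · rw [Fin.sub_val_of_le hx]
    omega
  · rw [Fin.coe_sub_iff_lt.2 hx]
    omega

lemma crosses_mk_iff {a b c d : Fin m} :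
    Crosses s(a, b) s(c, d) ↔
      Xor (CycBtw a b c) (CycBtw a b d) ∧ Xor (CycBtw b a c) (CycBtw b a d) := by
  have hcd (a b : Fin m) : (∃ c' d', s(c, d) = s(c', d') ∧ Xor (CycBtw a b c') (CycBtw a b d')) ↔
      Xor (CycBtw a b c) (CycBtw a b d) := by
    refine ⟨fun ⟨c', d', h, hx⟩ => ?_, fun h => ⟨c, d, rfl, h⟩⟩
    obtain ⟨rfl, rfl⟩ | ⟨rfl, rfl⟩ := Sym2.eq_iff.1 h
    exacts [hx, hx.symm]
  refine ⟨fun h => ⟨(hcd a b).1 (h a b rfl), (hcd b a).1 (h b a Sym2.eq_swap)⟩,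
    fun ⟨hab, hba⟩ a' b' h => ?_⟩
  obtain ⟨rfl, rfl⟩ | ⟨rfl, rfl⟩ := Sym2.eq_iff.1 h
  exacts [(hcd _ _).2 hab, (hcd _ _).2 hba]

lemma crosses_iff_chordsCross {p q : Fin m × Fin m} (hp : p.1 < p.2) (hq : q.1 < q.2) :
    Crosses s(p.1, p.2) s(q.1, q.2) ↔ ChordsCross p q := by
  rw [crosses_mk_iff, cycBtw_iff_of_lt hp, cycBtw_iff_of_lt hp, cycBtw_iff_of_gt hp,
    cycBtw_iff_of_gt hp]
  unfold Xor ChordsCross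
  omega

lemma isDiagonal_mk_iff_of_ne {i j : Fin m} (h : i ≠ j) :
    IsDiagonal s(i, j) ↔ ¬ PolyAdj i j := by
  simp only [IsDiagonal, Sym2.mk_isDiag_iff, h, not_false_eq_true, true_and]
  refine ⟨fun hd => hd i j rfl, fun hadj a b hab => ?_⟩
  obtain ⟨rfl, rfl⟩ | ⟨rfl, rfl⟩ := Sym2.eq_iff.1 hab
  · exact hadj
  · exact fun hba => hadj hba.symm

lemma ChordsCross.isDiagonal {p q : Fin m × Fin m} (h : ChordsCross p q) :
    IsDiagonal s(p.1, p.2) := by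
  have hp : p.1 < p.2 := by
    unfold ChordsCross at h
    omega
  rw [isDiagonal_mk_iff_of_ne hp.ne, PolyAdj, Fin.sub_val_of_le hp.le, Fin.coe_sub_iff_lt.2 hp]
  unfold ChordsCross at h
  omega

lemma IsDiagonal.exists_lt {e : Sym2 (Fin m)} (he : IsDiagonal e) :
    ∃ p : Fin m × Fin m, p.1 < p.2 ∧ s(p.1, p.2) = e := by
  induction e using Sym2.inductionOn with
  | hf a b =>
    rcases lt_or_gt_of_ne (mt Sym2.mk_isDiag_iff.2 he.1) with h | h
    exacts [⟨(a, b), h, rfl⟩, ⟨(b, a), h, Sym2.eq_swap⟩]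

lemma eq_of_sym2_mk_eq {p q : Fin m × Fin m} (hp : p.1 < p.2) (hq : q.1 < q.2)
    (h : s(p.1, p.2) = s(q.1, q.2)) : p = q := by
  obtain rfl | rfl := Sym2.mk_eq_mk_iff.1 h
  · rfl
  · exact absurd hq hp.asymm

open Classical in
/-- A set of diagonals together with all the sides of the polygon, as a set of chords. -/
noncomputable def chordsOf (t : Finset (Sym2 (Fin m))) : Finset (Fin m × Fin m) :=
  {p | p.1 < p.2 ∧ (IsDiagonal s(p.1, p.2) → s(p.1, p.2) ∈ t)}

lemma mem_chordsOf {t : Finset (Sym2 (Fin m))} {p : Fin m × Fin m} :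
    p ∈ chordsOf t ↔ p.1 < p.2 ∧ (IsDiagonal s(p.1, p.2) → s(p.1, p.2) ∈ t) := by
  simp only [chordsOf, mem_filter, mem_univ, true_and]

lemma forall_mem_chordsOf_not_chordsCross {t : Finset (Sym2 (Fin m))}
    (ht : ∀ e ∈ t, IsDiagonal e) {p : Fin m × Fin m} (hp : p.1 < p.2) :
    (∀ q ∈ chordsOf t, ¬ ChordsCross p q) ↔ ∀ f ∈ t, ¬ Crosses s(p.1, p.2) f := by
  constructor
  · intro h f hf
    obtain ⟨q, hq, rfl⟩ := (ht f hf).exists_lt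
    rw [crosses_iff_chordsCross hp hq]
    exact h q (mem_chordsOf.2 ⟨hq, fun _ => hf⟩)
  · intro h q hq hpq
    obtain ⟨hlt, hqt⟩ := mem_chordsOf.1 hq
    exact h _ (hqt hpq.symm.isDiagonal) ((crosses_iff_chordsCross hp hlt).2 hpq)

lemma isTriangulation_iff_of_isDiagonal {t : Finset (Sym2 (Fin (n + 2)))}
    (ht : ∀ e ∈ t, IsDiagonal e) :
    IsTriangulation n t ↔ ∀ e, IsDiagonal e → (e ∈ t ↔ ∀ f ∈ t, ¬ Crosses e f) :=
  ⟨fun h e he => ⟨h.2.1 e, h.2.2 e he⟩, fun h =>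
    ⟨ht, fun e he => (h e (ht e he)).1 he, fun e he => (h e he).2⟩⟩

lemma isChordTriangulation_chordsOf {t : Finset (Sym2 (Fin (n + 2)))}
    (ht : ∀ e ∈ t, IsDiagonal e) :
    IsChordTriangulation univ (chordsOf t) ↔ IsTriangulation n t := by
  rw [isTriangulation_iff_of_isDiagonal ht]
  constructor
  · intro h e he
    obtain ⟨p, hp, rfl⟩ := he.exists_lt
    rw [← forall_mem_chordsOf_not_chordsCross ht hp]
    simpa only [mem_chordsOf, IsChord, mem_univ, hp, he, true_and, forall_const] using h p
  · intro h p
    simp only [mem_chordsOf (p := p), IsChord, mem_univ, true_and, and_congr_right_iff]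
    intro hp
    rw [forall_mem_chordsOf_not_chordsCross ht hp]
    by_cases hd : IsDiagonal s(p.1, p.2)
    · simpa only [hd, forall_const] using h _ hd
    · refine iff_of_true (fun h => absurd h hd) ?_
      rw [← forall_mem_chordsOf_not_chordsCross ht hp]
      exact fun q _ hpq => hd hpq.isDiagonal

lemma card_chordsOf_sdiff_chordsOf {s t : Finset (Sym2 (Fin m))} (hs : ∀ e ∈ s, IsDiagonal e) :
    #(chordsOf s \ chordsOf t) = #(s \ t) := by
  refine card_nbij (fun p => s(p.1, p.2)) (fun p hp => ?_) (fun p hp q hq h => ?_) fun e he => ?_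
  · grind [mem_chordsOf]
  · exact eq_of_sym2_mk_eq (mem_chordsOf.1 (mem_sdiff.1 hp).1).1
      (mem_chordsOf.1 (mem_sdiff.1 hq).1).1 h
  · obtain ⟨hes, het⟩ := mem_sdiff.1 he
    have hd := hs e hes
    obtain ⟨p, hp, rfl⟩ := hd.exists_lt
    refine ⟨p, mem_coe.2 ?_, rfl⟩
    simp only [mem_sdiff, mem_chordsOf, hp, hd, hes, het, true_and, forall_const, not_false_eq_true]

lemma IsChordTriangulation.exists_chordsOf_eq {T : Finset (Fin (n + 2) × Fin (n + 2))}
    (hT : IsChordTriangulation univ T) : ∃ t, IsTriangulation n t ∧ chordsOf t = T := by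
  classical
  let t : Finset (Sym2 (Fin (n + 2))) := {e ∈ T.image fun p => s(p.1, p.2) | IsDiagonal e}
  have htT : chordsOf t = T := by
    ext p
    rw [mem_chordsOf]
    refine ⟨fun ⟨hp, hpt⟩ => ?_, fun hp => ⟨(hT.isChord hp).2.2, fun hd =>
      mem_filter.2 ⟨mem_image_of_mem _ hp, hd⟩⟩⟩
    by_cases hd : IsDiagonal s(p.1, p.2)
    · obtain ⟨q, hq, hqp⟩ := mem_image.1 (mem_filter.1 (hpt hd)).1
      exact eq_of_sym2_mk_eq (hT.isChord hq).2.2 hp hqp ▸ hq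
    · exact (hT p).2 ⟨⟨mem_univ _, mem_univ _, hp⟩, fun q _ hpq => hd hpq.isDiagonal⟩
  have ht : ∀ e ∈ t, IsDiagonal e := fun e he => (mem_filter.1 he).2
  exact ⟨t, (isChordTriangulation_chordsOf ht).1 (htT ▸ hT), htT⟩

theorem nonempty_assocGraph_iso_flipGraph {α : Type*} [LinearOrder α] {A : Finset α}
    (hA : #A = n + 2) : Nonempty (assocGraph n ≃g flipGraph A) := by
  obtain ⟨φ, rfl⟩ : ∃ φ : Fin (n + 2) ↪o α, univ.map φ.toEmbedding = A :=
    ⟨A.orderEmbOfFin hA, map_orderEmbOfFin_univ A hA⟩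
  let F (t : Triangulation n) : ChordTriangulation (univ.map φ.toEmbedding) :=
    ⟨(chordsOf t.1).map (chordEmbedding φ),
      (isChordTriangulation_map φ).2 ((isChordTriangulation_chordsOf t.2.1).2 t.2)⟩
  have hcard (s t : Triangulation n) : #((F s).1 \ (F t).1) = #(s.1 \ t.1) := by
    rw [← Finset.map_sdiff, card_map, card_chordsOf_sdiff_chordsOf s.2.1]
  have hinj : F.Injective := fun s t hst => by
    have hs : #(s.1 \ t.1) = 0 := by rw [← hcard, hst, Finset.sdiff_self, card_empty]
    have ht : #(t.1 \ s.1) = 0 := by rw [← hcard, hst, Finset.sdiff_self, card_empty]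
    rw [card_eq_zero, sdiff_eq_empty_iff_subset] at hs ht
    exact Subtype.ext (hs.antisymm ht)
  have hsurj : F.Surjective := fun ⟨T', hT'⟩ => by
    obtain ⟨T, hT, rfl⟩ := hT'.exists_map_eq φ
    obtain ⟨t, ht, rfl⟩ := hT.exists_chordsOf_eq
    exact ⟨⟨t, ht⟩, rfl⟩
  refine ⟨⟨Equiv.ofBijective F ⟨hinj, hsurj⟩, fun {s t} => ?_⟩⟩
  change #((F s).1 \ (F t).1) = 1 ∧ #((F t).1 \ (F s).1) = 1 ↔ _
  rw [hcard, hcard]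
  rfl

end Polygon

section BoxProduct

variable {ι κ : Type*}

/-- Reindexing of a box product. -/
def piBoxProdReindex {V : ι → Type*} (G : ∀ i, SimpleGraph (V i)) (e : κ ≃ ι) :
    piBoxProd G ≃g piBoxProd fun k => G (e k) where
  toEquiv := (Equiv.piCongrLeft V e).symm
  map_rel_iff' {x y} := by
    simp only [piBoxProd, Equiv.piCongrLeft_symm_apply, e.surjective.exists, e.surjective.forall,
      ne_eq, e.apply_eq_iff_eq]

/-- The box product of a family indexed by a disjoint union is a binary box product. -/
def piBoxProdSum {V : ι ⊕ κ → Type*} (G : ∀ i, SimpleGraph (V i)) :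
    piBoxProd G ≃g
      ((piBoxProd fun i => G (.inl i)) □ (piBoxProd fun k => G (.inr k))) where
  toEquiv := Equiv.sumPiEquivProdPi V
  map_rel_iff' {x y} := by
    simp only [SimpleGraph.boxProd_adj, piBoxProd, Equiv.sumPiEquivProdPi_apply, Sum.exists,
      Sum.forall, ne_eq, Sum.inl.injEq, Sum.inr.injEq, reduceCtorEq, not_false_eq_true,
      forall_const, funext_iff]
    grind

/-- The box product of a family with a single member is that member. -/
def piBoxProdUnique [Unique ι] {V : ι → Type*} (G : ∀ i, SimpleGraph (V i)) :
    piBoxProd G ≃g G default where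
  toEquiv := Equiv.piUnique V
  map_rel_iff' {x y} := by
    simp [piBoxProd, Unique.forall_iff, Unique.exists_iff]

variable {V W V' W' : Type*} {G : SimpleGraph V} {H : SimpleGraph W} {G' : SimpleGraph V'}
  {H' : SimpleGraph W'}

/-- The box product of two graph embeddings. -/
def boxProdEmbedding (φ : G ↪g G') (ψ : H ↪g H') : (G □ H) ↪g (G' □ H') where
  toEmbedding := φ.toEmbedding.prodMap ψ.toEmbedding
  map_rel_iff' {x y} := by
    simp [SimpleGraph.boxProd_adj]

/-- A one-vertex graph is a unit for the box product. -/
def boxProdUnit (G : SimpleGraph V) : (G □ (⊥ : SimpleGraph Unit)) ≃g G where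
  toEquiv := Equiv.prodPUnit V
  map_rel_iff' {x y} := by
    simp [SimpleGraph.boxProd_adj]

end BoxProduct

instance : Unique (Triangulation 0) :=
  have hdiag (e : Sym2 (Fin (0 + 2))) : ¬ IsDiagonal e := fun he => by
    obtain ⟨p, hp, rfl⟩ := he.exists_lt
    refine (isDiagonal_mk_iff_of_ne hp.ne).1 he (.inl ?_)
    rw [Fin.sub_val_of_le hp.le]
    omega
  { default := ⟨∅, by simp [IsTriangulation, hdiag]⟩
    uniq := fun t => Subtype.ext (eq_empty_of_forall_notMem fun e he => hdiag e (t.2.1 e he)) }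

/-- `v` lies in an induced subgraph of `G` that is a box product of `k` associahedron graphs `K_i`
with all indices `i` at most `m` and with sum of indices `N`. -/
def InAssocProd {V : Type*} (G : SimpleGraph V) (v : V) (k m N : ℕ) : Prop :=
  ∃ i : Fin k → ℕ, (∀ j, i j ≤ m) ∧ ∑ j, i j = N ∧
    ∃ φ : piBoxProd (fun j => assocGraph (i j)) ↪g G, v ∈ Set.range φ

namespace InAssocProd

variable {V W : Type*} {G : SimpleGraph V} {H : SimpleGraph W} {v : V} {w : W}
  {k l m n N M : ℕ}

lemma map (h : InAssocProd G v k m N) (φ : G ↪g H) : InAssocProd H (φ v) k m N := by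
  obtain ⟨i, him, hiN, ψ, x, rfl⟩ := h
  exact ⟨i, him, hiN, φ.comp ψ, x, rfl⟩

lemma boxProd (hG : InAssocProd G v k m N) (hH : InAssocProd H w l m M) :
    InAssocProd (G □ H) (v, w) (k + l) m (N + M) := by
  obtain ⟨i, him, rfl, φ, x, rfl⟩ := hG
  obtain ⟨i', him', rfl, ψ, y, rfl⟩ := hH
  let e : Fin (k + l) ≃ Fin k ⊕ Fin l := finSumFinEquiv.symm
  let F := fun s => assocGraph (Sum.elim i i' s)
  let χ := (piBoxProdReindex F e).symm.trans (piBoxProdSum F)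
  have hm : ∀ s, Sum.elim i i' s ≤ m := Sum.forall.2 ⟨him, him'⟩
  refine ⟨fun j => Sum.elim i i' (e j), fun j => hm (e j), ?_,
    (boxProdEmbedding φ ψ).comp χ.toRelEmbedding, χ.symm (x, y), ?_⟩
  · rw [e.sum_comp (Sum.elim i i'), Fintype.sum_sum_type]
    rfl
  · exact congrArg (boxProdEmbedding φ ψ) (χ.apply_symm_apply (x, y))

lemma zero (G : SimpleGraph V) (v : V) (k m : ℕ) : InAssocProd G v k m 0 :=
  ⟨fun _ => 0, fun _ => m.zero_le, sum_const_zero,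
    { toFun := fun _ => v
      inj' := fun _ _ _ => Subsingleton.elim _ _
      map_rel_iff' := fun {x y} => by simp [Subsingleton.elim x y] }, default, rfl⟩

lemma pad (h : InAssocProd G v k m N) (hkl : k ≤ l) : InAssocProd G v l m N := by
  have hbox := h.boxProd (zero (⊥ : SimpleGraph Unit) () (l - k) m)
  rw [Nat.add_sub_cancel' hkl] at hbox
  exact hbox.map (boxProdUnit G).toEmbedding

lemma of_iso (e : assocGraph n ≃g G) (hnm : n ≤ m) : InAssocProd G v 1 m n := by
  let χ := (piBoxProdUnique fun _ : Fin 1 => assocGraph n).trans e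
  exact ⟨fun _ => n, fun _ => hnm, Fin.sum_univ_one _, χ.toRelEmbedding, χ.symm v,
    χ.apply_symm_apply v⟩

end InAssocProd

section CutByChords

variable {α : Type*} [LinearOrder α] {A : Finset α} {S : Finset (α × α)} {e f : α × α}

lemma card_insidePart_add_card_outsidePart (he : IsChord A e) :
    #(insidePart A e) + #(outsidePart A e) = #A + 2 := by
  have hunion : insidePart A e ∪ outsidePart A e = A := by
    grind [mem_insidePart, mem_outsidePart]
  have hinter : insidePart A e ∩ outsidePart A e = {e.1, e.2} := by
    grind [IsChord, mem_insidePart, mem_outsidePart]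
  rw [← card_union_add_card_inter, hunion, hinter, card_pair he.2.2.ne]

lemma card_insidePart_add_card_insidePart {a b c : α} (hac : a < c) (hcb : c < b) (hc : c ∈ A) :
    #(insidePart A (a, c)) + #(insidePart A (c, b)) = #(insidePart A (a, b)) + 1 := by
  have hunion : insidePart A (a, c) ∪ insidePart A (c, b) = insidePart A (a, b) := by
    grind [mem_insidePart]
  have hinter : insidePart A (a, c) ∩ insidePart A (c, b) = {c} := by
    grind [mem_insidePart]
  rw [← card_union_add_card_inter, hunion, hinter, card_singleton]

lemma two_le_card_insidePart (he : IsChord A e) : 2 ≤ #(insidePart A e) := by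
  rw [← card_pair he.2.2.ne]
  exact card_le_card fun x hx => by grind [IsChord, mem_insidePart]

lemma two_le_card_outsidePart (he : IsChord A e) : 2 ≤ #(outsidePart A e) := by
  rw [← card_pair he.2.2.ne]
  exact card_le_card fun x hx => by grind [IsChord, mem_outsidePart]

lemma exists_mem_between_of_two_lt_card_insidePart (h : 2 < #(insidePart A e)) :
    ∃ x ∈ A, e.1 < x ∧ x < e.2 := by
  by_contra! hA
  refine h.not_ge ((card_le_card fun x hx => ?_).trans (card_le_two (a := e.1) (b := e.2)))
  obtain ⟨hxA, hax, hxb⟩ := mem_insidePart.1 hx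
  rw [mem_insert, mem_singleton]
  exact hax.eq_or_lt.imp Eq.symm fun hlt => hxb.antisymm (hA x hxA hlt)

lemma insidePart_outsidePart_of_le (h : f.2 ≤ e.1) :
    insidePart (outsidePart A f) e = insidePart A e := by
  grind [mem_insidePart, mem_outsidePart]

lemma outsidePart_outsidePart_of_le (h₁ : e.1 ≤ f.1) (h₂ : f.2 ≤ e.2) :
    outsidePart (outsidePart A f) e = outsidePart A e := by
  grind [mem_outsidePart]

namespace IsChordTriangulation

lemma exists_insidePart_eq (hS : IsChordTriangulation A S) (hA : 1 < #A) :
    ∃ e ∈ S, insidePart A e = A := by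
  have hne : A.Nonempty := card_pos.1 (by omega)
  have hlt : A.min' hne < A.max' hne := min'_lt_max'_of_card A hA
  refine ⟨(A.min' hne, A.max' hne), (hS _).2 ⟨⟨min'_mem A hne, max'_mem A hne, hlt⟩, ?_⟩,
    filter_true_of_mem fun x hx => ⟨min'_le A x hx, le_max' A x hx⟩⟩
  intro f hf hcross
  obtain ⟨h₁, h₂, -⟩ := hS.isChord hf
  rcases hcross with ⟨-, -, h⟩ | ⟨h, -, -⟩
  · exact h.not_ge (le_max' A _ h₂)
  · exact h.not_ge (min'_le A _ h₁)

lemma exists_apex {a b x : α} (hS : IsChordTriangulation A S) (hab : (a, b) ∈ S) (hx : x ∈ A)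
    (hax : a < x) (hxb : x < b) : ∃ c, a < c ∧ c < b ∧ (a, c) ∈ S ∧ (c, b) ∈ S := by
  obtain ⟨haA, hbA, -⟩ := hS.isChord hab
  obtain ⟨y, hy, hmin⟩ := exists_min_image {y ∈ A | a < y} id ⟨x, mem_filter.2 ⟨hx, hax⟩⟩
  simp only [mem_filter, id, and_imp] at hy hmin
  have hay : (a, y) ∈ S := (hS _).2 ⟨⟨haA, hy⟩, fun f hf => by
    have hfA := hS.isChord hf
    grind [IsChord, ChordsCross]⟩
  -- The apex is the last neighbour of `a` before `b`.
  obtain ⟨c, hc, hmax⟩ := exists_max_image {c ∈ A | a < c ∧ c < b ∧ (a, c) ∈ S} id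
    ⟨y, mem_filter.2 ⟨hy.1, hy.2, (hmin x hx hax).trans_lt hxb, hay⟩⟩
  simp only [mem_filter, id, and_imp] at hc hmax
  obtain ⟨hcA, hac, hcb, hacS⟩ := hc
  refine ⟨c, hac, hcb, hacS, (hS _).2 ⟨⟨hcA, hbA, hcb⟩, fun ⟨p, q⟩ hf hcross => ?_⟩⟩
  have hq := (hS.isChord hf).2.1
  have hab' := hS.not_chordsCross hab hf
  have hac' := hS.not_chordsCross hacS hf
  obtain rfl : p = a := by
    grind [ChordsCross]
  have := hmax q hq
  grind [ChordsCross]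

/-- The triangle is the centroid of the dual tree of the triangulation. -/
lemma exists_balanced_triangle (hS : IsChordTriangulation A S) (hA : 2 < #A) :
    ∃ a b c, (a, b) ∈ S ∧ (a, c) ∈ S ∧ (c, b) ∈ S ∧
      2 * #(insidePart A (a, c)) ≤ #A + 2 ∧ 2 * #(insidePart A (c, b)) ≤ #A + 2 ∧
        2 * #(outsidePart A (a, b)) ≤ #A + 2 := by
  obtain ⟨r, hr, hrA⟩ := hS.exists_insidePart_eq (by omega)
  obtain ⟨⟨a, b⟩, hab, hmin⟩ := exists_min_image {e ∈ S | #A + 2 < 2 * #(insidePart A e)}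
    (fun e => #(insidePart A e)) ⟨r, mem_filter.2 ⟨hr, by rw [hrA]; omega⟩⟩
  rw [mem_filter] at hab
  obtain ⟨x, hx, hax, hxb⟩ :=
    exists_mem_between_of_two_lt_card_insidePart (A := A) (e := (a, b)) (by omega)
  obtain ⟨c, hac, hcb, hacS, hcbS⟩ := hS.exists_apex hab.1 hx hax hxb
  refine ⟨a, b, c, hab.1, hacS, hcbS, ?_⟩
  have hin := card_insidePart_add_card_insidePart hac hcb (hS.isChord hcbS).1
  have hout := card_insidePart_add_card_outsidePart (hS.isChord hab.1)
  have hac2 := two_le_card_insidePart (hS.isChord hacS)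
  have hcb2 := two_le_card_insidePart (hS.isChord hcbS)
  refine ⟨?_, ?_, by omega⟩
  · by_contra! h
    have := hmin _ (mem_filter.2 ⟨hacS, h⟩)
    omega
  · by_contra! h
    have := hmin _ (mem_filter.2 ⟨hcbS, h⟩)
    omega

lemma exists_trisection (hS : IsChordTriangulation A S) (hA : 4 ≤ #A) :
    ∃ f ∈ S, ∃ e ∈ S, IsChord (outsidePart A f) e ∧
      2 * #(insidePart A f) ≤ #A + 2 ∧ 2 * #(insidePart (outsidePart A f) e) ≤ #A + 2 ∧
        2 * #(outsidePart (outsidePart A f) e) ≤ #A + 2 := by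
  obtain ⟨a, b, c, habS, hacS, hcbS, hp, hq, hr⟩ :=
    hS.exists_balanced_triangle (by omega)
  have hab := hS.isChord habS
  have hac := hS.isChord hacS
  have hcb := hS.isChord hcbS
  have hsum : #(insidePart A (a, c)) + #(insidePart A (c, b)) = #(insidePart A (a, b)) + 1 :=
    card_insidePart_add_card_insidePart hac.2.2 hcb.2.2 hcb.1
  have hab_out := card_insidePart_add_card_outsidePart hab
  have hac_out := card_insidePart_add_card_outsidePart hac
  have hcb_out := card_insidePart_add_card_outsidePart hcb
  -- Cut off the two largest sides of the triangle; the triangle stays with the smallest one.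
  obtain hmin | hmin | hmin :
      (#(outsidePart A (a, b)) ≤ #(insidePart A (a, c)) ∧
        #(outsidePart A (a, b)) ≤ #(insidePart A (c, b))) ∨
      (#(insidePart A (a, c)) ≤ #(insidePart A (c, b)) ∧
        #(insidePart A (a, c)) ≤ #(outsidePart A (a, b))) ∨
      (#(insidePart A (c, b)) ≤ #(insidePart A (a, c)) ∧
        #(insidePart A (c, b)) ≤ #(outsidePart A (a, b))) := by omega
  · have he : IsChord (outsidePart A (a, c)) (c, b) := by grind [IsChord, mem_outsidePart]
    have he_out := card_insidePart_add_card_outsidePart he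
    have heq : #(insidePart (outsidePart A (a, c)) (c, b)) = #(insidePart A (c, b)) :=
      congrArg card (insidePart_outsidePart_of_le le_rfl)
    exact ⟨_, hacS, _, hcbS, he, by omega, by omega, by omega⟩
  · have he : IsChord (outsidePart A (c, b)) (a, b) := by grind [IsChord, mem_outsidePart]
    have he_out := card_insidePart_add_card_outsidePart he
    have heq : #(outsidePart (outsidePart A (c, b)) (a, b)) = #(outsidePart A (a, b)) :=
      congrArg card (outsidePart_outsidePart_of_le hac.2.2.le le_rfl)
    exact ⟨_, hcbS, _, habS, he, by omega, by omega, by omega⟩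
  · have he : IsChord (outsidePart A (a, c)) (a, b) := by grind [IsChord, mem_outsidePart]
    have he_out := card_insidePart_add_card_outsidePart he
    have heq : #(outsidePart (outsidePart A (a, c)) (a, b)) = #(outsidePart A (a, b)) :=
      congrArg card (outsidePart_outsidePart_of_le le_rfl hcb.2.2.le)
    exact ⟨_, hacS, _, habS, he, by omega, by omega, by omega⟩

end IsChordTriangulation

end CutByChords

namespace InAssocProd

variable {α : Type*} [LinearOrder α] {A : Finset α} {e : α × α} {k l m N M : ℕ}

lemma cut {T : ChordTriangulation A} (he : e ∈ T.1)
    (hin : InAssocProd (flipGraph (insidePart A e)) (T.inside he) k m N)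
    (hout : InAssocProd (flipGraph (outsidePart A e)) (T.outside he) l m M) :
    InAssocProd (flipGraph A) T (k + l) m (N + M) := by
  have h := (hin.boxProd hout).map (ChordTriangulation.glue (T.2.isChord he))
  rwa [T.glue_inside_outside he] at h

theorem of_div_two_pow_le {j s : ℕ} (T : ChordTriangulation A) (hA : #A = s + 2) (hm : 1 ≤ m)
    (hs : s / 2 ^ j ≤ m) : InAssocProd (flipGraph A) T (3 ^ j) m s := by
  induction j generalizing A s with
  | zero =>
    obtain ⟨φ⟩ := nonempty_assocGraph_iso_flipGraph hA
    exact of_iso φ (by simpa using hs)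
  | succ j ih =>
    obtain hs1 | hs2 := Nat.lt_or_ge s 2
    · obtain ⟨φ⟩ := nonempty_assocGraph_iso_flipGraph hA
      exact (of_iso φ (by omega)).pad (Nat.one_le_pow _ 3 (by norm_num))
    obtain ⟨f, hf, e, he, heA, h₁, h₂, h₃⟩ := T.2.exists_trisection (by omega)
    have hfA := T.2.isChord hf
    have he' : e ∈ (T.outside hf).1 := mem_filter.2 ⟨he, heA⟩
    have hpiece (B : Finset α) (U : ChordTriangulation B) (hB : 2 ≤ #B) (hBA : 2 * #B ≤ #A + 2) :
        InAssocProd (flipGraph B) U (3 ^ j) m (#B - 2) := by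
      refine ih U (by omega) (le_trans ?_ hs)
      rw [pow_succ', ← Nat.div_div_eq_div_mul]
      exact Nat.div_le_div_right (by omega)
    have h := (hpiece _ (T.inside hf) (two_le_card_insidePart hfA) h₁).cut hf
      ((hpiece _ ((T.outside hf).inside he') (two_le_card_insidePart heA) h₂).cut he'
        (hpiece _ ((T.outside hf).outside he') (two_le_card_outsidePart heA) h₃))
    have hcard := card_insidePart_add_card_outsidePart hfA
    have hcard' := card_insidePart_add_card_outsidePart heA
    have hin := two_le_card_insidePart hfA
    have hin' := two_le_card_insidePart heA
    have hout' := two_le_card_outsidePart heA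
    convert h using 1 <;> omega

end InAssocProd

theorem triangulation_mem_boxProd_class_general (n k : ℕ) (hk : 1 ≤ k)
    (hkn : 2 ^ Nat.log 3 k ≤ n) (t : Triangulation n) :
    ∃ S : Set (Triangulation n), t ∈ S ∧
      ∃ i : Fin k → ℕ, ∑ j, i j = n ∧
        (∀ j : Fin k, (i j : ℝ) ≤ (n : ℝ) / 2 ^ (Nat.log 3 k)) ∧
        Nonempty (((assocGraph n).induce S) ≃g piBoxProd (fun j => assocGraph (i j))) := by
  obtain ⟨ψ⟩ : Nonempty (assocGraph n ≃g flipGraph (univ : Finset (Fin (n + 2)))) :=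
    nonempty_assocGraph_iso_flipGraph (card_fin _)
  have hm : 1 ≤ n / 2 ^ Nat.log 3 k := Nat.div_pos hkn (by positivity)
  have h := ((InAssocProd.of_div_two_pow_le (ψ t) (card_fin _) hm le_rfl).pad
    (Nat.pow_log_le_self 3 (by omega))).map ψ.symm.toRelEmbedding
  obtain ⟨i, hi, hsum, φ, x, hx⟩ := h
  refine ⟨Set.range φ, ⟨x, hx.trans (ψ.symm_apply_apply t)⟩, i, hsum, fun j => ?_,
    ⟨φ.isoInduceRange.symm⟩⟩
  calc (i j : ℝ) ≤ (n / 2 ^ Nat.log 3 k : ℕ) := Nat.cast_le.2 (hi j)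
    _ ≤ (n : ℝ) / (2 ^ Nat.log 3 k : ℕ) := Nat.cast_div_le
    _ = n / 2 ^ Nat.log 3 k := by rw [Nat.cast_pow, Nat.cast_ofNat]

/-- for every `n ≥ 1`, every `1 ≤ k ≤ n` and every triangulation `t` of
the convex `(n+2)`-gon, there are a set `S ∋ t` of triangulations and naturals
`i_1, …, i_k` with each `i_j ≤ n / 2^{⌊log_3 k⌋}` such that the subgraph of `K_n`
induced by `S` is isomorphic to the Cartesian product `K_{i_1} □ K_{i_2} □ ⋯ □ K_{i_k}`. -/
theorem triangulation_mem_boxProd_class (n k : ℕ) (hn : 1 ≤ n) (hk : 1 ≤ k)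
    (hkn : k ≤ n) (t : Triangulation n) :
    ∃ S : Set (Triangulation n), t ∈ S ∧
      ∃ i : Fin k → ℕ,
        (∀ j : Fin k, (i j : ℝ) ≤ (n : ℝ) / 2 ^ (Nat.log 3 k)) ∧
        Nonempty (((assocGraph n).induce S) ≃g piBoxProd (fun j => assocGraph (i j))) := by
  have hlog : 2 ^ Nat.log 3 k ≤ n :=
    (Nat.pow_le_pow_left (by norm_num) _).trans ((Nat.pow_log_le_self 3 (by omega)).trans hkn)
  obtain ⟨S, htS, i, -, hi, hS⟩ := triangulation_mem_boxProd_class_general n k hk hlog t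
  exact ⟨S, htS, i, hi, hS⟩
end
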